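/- arXiv:2512.15314 — 8 statements merged into one kernel-verified Lean document; each statement's English description precedes it below -/
import Mathlib

section
/- Let V be a closed subspace of W such that the composition of i with the inclusion map V ↪ W is a compact operator from V to H. Then the solution operator R_V : H → H is a compact continuous linear operator which is self-adjoint (⟨R_V f, g⟩_H = ⟨f, R_V g⟩_H for all f, g ∈ H), positive semidefinite (⟨R_V f, f⟩_H ≥ 0 for all f ∈ H), and satisfies ‖R_V f‖_H ≤ ‖f‖_H for all f ∈ H. -/
open scoped InnerProductSpace

/-!
Write `T : V → H` for the restriction of `i` to `V`. The defining relation of `u_V` says that it is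
the adjoint of `T`, so `R_V = T T*`, and everything follows from this factorisation: compactness
from that of `T`, symmetry and positivity from `⟪T T* f, g⟫ = ⟪T* f, T* g⟫`, and the norm bound from
`‖T*‖ ≤ ‖T‖ ≤ 1`. Uniqueness in the defining relation already forces `T*` to be linear.
-/

section FormalAdjoint

variable {𝕜 E F : Type*} [RCLike 𝕜] [NormedAddCommGroup E] [InnerProductSpace 𝕜 E]
  [NormedAddCommGroup F] [InnerProductSpace 𝕜 F] {T : E →L[𝕜] F} {S : F → E}

/-- `S` is a formal adjoint of `T`, as the Riesz representative `f ↦ u_V f` is of the restriction of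
`i` to `V`. It is a bare function because its linearity and continuity are automatic, and its
existence is part of the notion, so that it makes sense on incomplete spaces. -/
def IsFormalAdjoint (T : E →L[𝕜] F) (S : F → E) : Prop :=
  ∀ f v, ⟪S f, v⟫_𝕜 = ⟪f, T v⟫_𝕜

namespace IsFormalAdjoint

theorem isLinearMap (h : IsFormalAdjoint T S) : IsLinearMap 𝕜 S where
  map_add f g := ext_inner_right 𝕜 fun v => by simp only [inner_add_left, h _ v]
  map_smul c f := ext_inner_right 𝕜 fun v => by simp only [inner_smul_left, h _ v]

theorem inner_comp_left (h : IsFormalAdjoint T S) (f g : F) :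
    ⟪T (S f), g⟫_𝕜 = ⟪S f, S g⟫_𝕜 := by
  rw [← inner_conj_symm, ← h, inner_conj_symm]

theorem norm_apply_le (h : IsFormalAdjoint T S) (f : F) : ‖S f‖ ≤ ‖T‖ * ‖f‖ := by
  have norm_sq_le : ‖S f‖ * ‖S f‖ ≤ ‖T‖ * ‖f‖ * ‖S f‖ :=
    calc
      ‖S f‖ * ‖S f‖ = RCLike.re ⟪f, T (S f)⟫_𝕜 := by rw [← h, inner_self_eq_norm_mul_norm]
      _ ≤ ‖f‖ * ‖T (S f)‖ := re_inner_le_norm f (T (S f))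
      _ ≤ ‖f‖ * (‖T‖ * ‖S f‖) := by gcongr; exact T.le_opNorm (S f)
      _ = ‖T‖ * ‖f‖ * ‖S f‖ := by ring
  rcases (norm_nonneg (S f)).eq_or_lt with norm_eq_zero | norm_pos
  · rw [← norm_eq_zero]
    positivity
  · exact le_of_mul_le_mul_right norm_sq_le norm_pos

theorem isBoundedLinearMap (h : IsFormalAdjoint T S) : IsBoundedLinearMap 𝕜 S :=
  h.isLinearMap.with_bound ‖T‖ h.norm_apply_le

theorem isPositive_comp {S : F →L[𝕜] E} (h : IsFormalAdjoint T S) : (T ∘L S).IsPositive := by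
  refine ⟨fun f g => (h.inner_comp_left f g).trans (h f (S g)), fun f => ?_⟩
  calc
    0 ≤ RCLike.re ⟪S f, S f⟫_𝕜 := inner_self_nonneg
    _ = RCLike.re ⟪T (S f), f⟫_𝕜 := by rw [h.inner_comp_left]

theorem norm_comp_apply_le (h : IsFormalAdjoint T S) (f : F) : ‖T (S f)‖ ≤ ‖T‖ ^ 2 * ‖f‖ :=
  calc
    ‖T (S f)‖ ≤ ‖T‖ * (‖T‖ * ‖f‖) := T.le_opNorm_of_le (h.norm_apply_le f)
    _ = ‖T‖ ^ 2 * ‖f‖ := by ring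

end IsFormalAdjoint

theorem stmt_0_general (T : E →L[𝕜] F) (hT_norm : ∀ v, ‖T v‖ ≤ ‖v‖) (hT : IsCompactOperator T)
    (S : F → E) (hS : IsFormalAdjoint T S) :
    ∃ R : F →L[𝕜] F,
      (∀ f, R f = T (S f)) ∧
      IsCompactOperator R ∧
      (∀ f g, ⟪R f, g⟫_𝕜 = ⟪f, R g⟫_𝕜) ∧
      (∀ f, 0 ≤ RCLike.re ⟪R f, f⟫_𝕜) ∧
      (∀ f, ‖R f‖ ≤ ‖f‖) := by
  let S' : F →L[𝕜] E := hS.isBoundedLinearMap.toContinuousLinearMap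
  have comp_isPositive : (T ∘L S').IsPositive :=
    IsFormalAdjoint.isPositive_comp (S := S') hS
  have norm_le_one : ‖T‖ ≤ 1 :=
    T.opNorm_le_bound zero_le_one fun v => (hT_norm v).trans_eq (one_mul _).symm
  refine ⟨T ∘L S', fun _ => rfl, hT.comp_clm S', comp_isPositive.isSymmetric,
    comp_isPositive.re_inner_nonneg_left, fun f => ?_⟩
  calc
    ‖T (S f)‖ ≤ ‖T‖ ^ 2 * ‖f‖ := hS.norm_comp_apply_le f
    _ ≤ ‖f‖ := mul_le_of_le_one_left (norm_nonneg f) (pow_le_one₀ (norm_nonneg T) norm_le_one)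

end FormalAdjoint

/-- Let `H`, `W` be real Hilbert spaces, `i : W → H` continuous linear
with `‖i w‖ ≤ ‖w‖`.  Let `V` be a closed subspace of `W` such that the composition of `i`
with the inclusion `V ↪ W` is a compact operator from `V` to `H`.  Let `uV f ∈ V` be the
Riesz representative, i.e. `⟪uV f, v⟫_W = ⟪f, i v⟫_H` for all `v ∈ V`, and let
`R_V f := i (uV f)` be the solution operator.  Then `R_V` is a compact continuous linear
operator on `H` which is self-adjoint, positive semidefinite, and satisfies
`‖R_V f‖ ≤ ‖f‖` for all `f`. -/
theorem stmt_0
    {H W : Type*} [NormedAddCommGroup H] [InnerProductSpace ℝ H] [CompleteSpace H]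
    [NormedAddCommGroup W] [InnerProductSpace ℝ W] [CompleteSpace W]
    (i : W →L[ℝ] H) (hi : ∀ w : W, ‖i w‖ ≤ ‖w‖)
    (V : Submodule ℝ W) (hVclosed : IsClosed (V : Set W))
    (hcompact : IsCompactOperator (fun v : V => i (v : W)))
    (uV : H → W) (huVmem : ∀ f : H, uV f ∈ V)
    (huV : ∀ f : H, ∀ v ∈ V, ⟪uV f, v⟫_ℝ = ⟪f, i v⟫_ℝ) :
    ∃ R : H →L[ℝ] H,
      (∀ f : H, R f = i (uV f)) ∧
      IsCompactOperator (⇑R) ∧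
      (∀ f g : H, ⟪R f, g⟫_ℝ = ⟪f, R g⟫_ℝ) ∧
      (∀ f : H, 0 ≤ ⟪R f, f⟫_ℝ) ∧
      (∀ f : H, ‖R f‖ ≤ ‖f‖) :=
  stmt_0_general (i ∘L V.subtypeL) (fun v => hi v) hcompact (fun f => ⟨uV f, huVmem f⟩)
    fun f v => huV f v v.2
end

section
/- Let V be a closed subspace of W and suppose there is a constant α > 0 such that ‖v‖_W² ≥ (1 + α²) ‖i v‖_H² for all v ∈ V (an abstract Friedrichs inequality). Then every eigenvalue μ of the solution operator R_V — that is, every μ ∈ ℝ for which there exists f ∈ H, f ≠ 0, with R_V f = μ f — satisfies 0 ≤ μ ≤ 1/(1 + α²); in particular, all eigenvalues of R_V lie in the interval [0, 1). -/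
open scoped InnerProductSpace

/-!
Testing the variational equation for `u f` with `v = u f` itself, an eigenpair `i (u f) = μ • f`
gives `‖u f‖² = ⟪f, i (u f)⟫ = μ ‖f‖²`, so that `μ` is the nonnegative real number
`(‖u f‖ / ‖f‖)²`. The Friedrichs inequality `c ‖i v‖² ≤ ‖v‖²` for `v = u f` then reads
`c μ² ‖f‖² ≤ μ ‖f‖²`, that is, `c μ² ≤ μ`.
-/

theorem le_one_div_of_mul_sq_le {K : Type*} [Field K] [LinearOrder K] [IsStrictOrderedRing K]
    {c r : K} (hc : 0 < c) (h : c * r ^ 2 ≤ r) : r ≤ 1 / c := by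
  rcases le_or_gt r 0 with hr | hr
  · exact hr.trans (one_div_pos.2 hc).le
  · have hrc : r * c * r ≤ 1 * r := by linarith
    exact (le_div_iff₀ hc).2 (le_of_mul_le_mul_right hrc hr)

theorem mul_norm_sq_le_div_norm_sq {𝕜 E : Type*} [NormedField 𝕜] [NormedAddCommGroup E]
    [NormedSpace 𝕜 E] {a : 𝕜} {x : E} {b c : ℝ} (hx : x ≠ 0) (h : c * ‖a • x‖ ^ 2 ≤ b ^ 2) :
    c * ‖a‖ ^ 2 ≤ (b / ‖x‖) ^ 2 := by
  rw [norm_smul, mul_pow, ← mul_assoc] at h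
  rw [div_pow]
  exact (le_div_iff₀ (pow_pos (norm_pos_iff.2 hx) 2)).2 h

section Eigenvalue

variable {𝕜 H W : Type*} [RCLike 𝕜] [NormedAddCommGroup H] [InnerProductSpace 𝕜 H]
  [SeminormedAddCommGroup W] [InnerProductSpace 𝕜 W]

theorem eq_sq_norm_div_norm_of_inner_self_eq_inner_smul {u : W} {f : H} {μ : 𝕜} (hf : f ≠ 0)
    (h : ⟪u, u⟫_𝕜 = ⟪f, μ • f⟫_𝕜) : μ = (((‖u‖ / ‖f‖) ^ 2 : ℝ) : 𝕜) := by
  have norm_f_ne_zero : (‖f‖ : 𝕜) ≠ 0 := RCLike.ofReal_ne_zero.2 (norm_ne_zero_iff.2 hf)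
  rw [inner_smul_right, inner_self_eq_norm_sq_to_K, inner_self_eq_norm_sq_to_K] at h
  push_cast
  rw [div_pow, h, mul_div_cancel_right₀ μ (pow_ne_zero 2 norm_f_ne_zero)]

theorem stmt_2_general (i : W → H) (V : Set W) {c : ℝ} (hc : 0 < c)
    (hFriedrichs : ∀ v ∈ V, c * ‖i v‖ ^ 2 ≤ ‖v‖ ^ 2)
    (u : H → W) (hu_mem : ∀ f, u f ∈ V) (hu : ∀ f, ∀ v ∈ V, ⟪u f, v⟫_𝕜 = ⟪f, i v⟫_𝕜)
    {μ : 𝕜} (hμ : ∃ f, f ≠ 0 ∧ i (u f) = μ • f) :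
    ∃ r : ℝ, (r : 𝕜) = μ ∧ 0 ≤ r ∧ r ≤ 1 / c := by
  obtain ⟨f, hf, hfμ⟩ := hμ
  have energy : ⟪u f, u f⟫_𝕜 = ⟪f, μ • f⟫_𝕜 := hfμ ▸ hu f (u f) (hu_mem f)
  have friedrichs : c * ‖μ • f‖ ^ 2 ≤ ‖u f‖ ^ 2 := hfμ ▸ hFriedrichs (u f) (hu_mem f)
  have μ_eq := eq_sq_norm_div_norm_of_inner_self_eq_inner_smul hf energy
  have norm_μ : ‖μ‖ = (‖u f‖ / ‖f‖) ^ 2 := by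
    rw [μ_eq, RCLike.norm_ofReal, abs_of_nonneg (sq_nonneg _)]
  refine ⟨‖μ‖, by rw [norm_μ, ← μ_eq], norm_nonneg μ, le_one_div_of_mul_sq_le hc ?_⟩
  exact (mul_norm_sq_le_div_norm_sq hf friedrichs).trans_eq norm_μ.symm

end Eigenvalue

/-- Let `H`, `W` be real Hilbert spaces, `i : W → H` continuous linear
with `‖i w‖ ≤ ‖w‖`.  Let `V` be a closed subspace of `W` and suppose there is `α > 0`
with `‖v‖² ≥ (1 + α²)‖i v‖²` for all `v ∈ V` (abstract Friedrichs inequality).  With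
`uV f ∈ V` the Riesz representative (`⟪uV f, v⟫_W = ⟪f, i v⟫_H` for all `v ∈ V`) and
`R_V f := i (uV f)`, every eigenvalue `μ` of `R_V` (i.e. `μ` such that `R_V f = μ • f`
for some `f ≠ 0`) satisfies `0 ≤ μ ≤ 1/(1 + α²)`; in particular `μ` lies in `[0, 1)`. -/
theorem stmt_2
    {H W : Type*} [NormedAddCommGroup H] [InnerProductSpace ℝ H] [CompleteSpace H]
    [NormedAddCommGroup W] [InnerProductSpace ℝ W] [CompleteSpace W]
    (i : W →L[ℝ] H) (hi : ∀ w : W, ‖i w‖ ≤ ‖w‖)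
    (V : Submodule ℝ W) (hVclosed : IsClosed (V : Set W))
    (α : ℝ) (hα : 0 < α)
    (hFriedrichs : ∀ v ∈ V, (1 + α ^ 2) * ‖i v‖ ^ 2 ≤ ‖v‖ ^ 2)
    (uV : H → W) (huVmem : ∀ f : H, uV f ∈ V)
    (huV : ∀ f : H, ∀ v ∈ V, ⟪uV f, v⟫_ℝ = ⟪f, i v⟫_ℝ) :
    ∀ μ : ℝ, (∃ f : H, f ≠ 0 ∧ i (uV f) = μ • f) →
      0 ≤ μ ∧ μ ≤ 1 / (1 + α ^ 2) ∧ μ < 1 := by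
  intro μ hμ
  obtain ⟨_, rfl, h_nonneg, h_le⟩ :=
    stmt_2_general i V (by positivity) hFriedrichs uV huVmem huV hμ
  have one_div_lt_one : 1 / (1 + α ^ 2) < 1 :=
    (div_lt_one (by positivity)).2 (lt_add_of_pos_right 1 (pow_pos hα 2))
  exact ⟨h_nonneg, h_le, h_le.trans_lt one_div_lt_one⟩
end

section
/- Assume i is injective. Fix finite-dimensional subspaces X_n of W and G_n of G, let V_n := {w ∈ X_n + G_n : ⟨i w, i g⟩_H = 0 for all g ∈ G_n}, and let R_n := R_{V_n}. Let λ ∈ ℝ with λ ≠ −1, x ∈ X_n and g ∈ G_n with ξ := x + g ≠ 0. Then (λ, x, g) solves the discrete mixed eigenvalue problem if and only if ξ ∈ V_n and R_n(i ξ) = (λ + 1)⁻¹ (i ξ). -/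
open scoped InnerProductSpace

/-! Against `G` the `H`- and `W`-inner products agree, so `V = {w ∈ X + G : i w ⊥ i G}` is the
`W`-orthogonal complement of `G` in `X + G`, and `X + G = V + G`. If `i ξ ⊥ i G`, the identity
`⟪ξ, v⟫ = ⟪(λ + 1) • i ξ, i v⟫` reads `0 = 0` for `v ∈ G`; hence testing it on `X`, on `X + G` and
on `V` all amount to the same. On `X` it is the mixed eigenvalue equation, on `V` it says that `ξ`
is the Riesz solution with datum `(λ + 1) • i ξ`. -/

section Galerkin

variable {𝕜 H W : Type*} [RCLike 𝕜] [NormedAddCommGroup H] [InnerProductSpace 𝕜 H]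
  [NormedAddCommGroup W] [InnerProductSpace 𝕜 W]

/-- The subspace of all test vectors `v` for which the variational equation
`⟪u, v⟫ = ⟪f, i v⟫` holds. -/
noncomputable def variationalTestSpace (i : W →ₗ[𝕜] H) (f : H) (u : W) : Submodule 𝕜 W :=
  LinearMap.eqLocus (innerₛₗ 𝕜 u) (innerₛₗ 𝕜 f ∘ₗ i)

/-- `u` is the Riesz solution `u_V(f)` of the variational problem on `V` with datum `f`. -/
def IsVariationalSolution (i : W →ₗ[𝕜] H) (V : Submodule 𝕜 W) (f : H) (u : W) : Prop :=
  u ∈ V ∧ V ≤ variationalTestSpace i f u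

/-- Gradient-type subspaces, abstracting `∇H¹₀(Ω) ⊆ H₀(curl; Ω)`. Closedness is not part of the
definition. -/
def IsGradientType (i : W →ₗ[𝕜] H) (G : Submodule 𝕜 W) : Prop :=
  ∀ w : W, ∀ g ∈ G, ⟪w, g⟫_𝕜 = ⟪i w, i g⟫_𝕜

/-- The discretely divergence-free subspace `V = {w ∈ X + G : i w ⊥ i G}`. -/
def discreteDivFree (i : W →ₗ[𝕜] H) (X G : Submodule 𝕜 W) : Submodule 𝕜 W :=
  (X ⊔ G) ⊓ (G.map i)ᗮ.comap i

/-- The equations of the discrete mixed eigenvalue problem for `(lam, x, g)`. The memberships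
`x ∈ X`, `g ∈ G` and the condition `x + g ≠ 0` are left to the user. The scalar `lam` stands inside
the inner product, so that it is not conjugated over `ℂ`. -/
def IsMixedSolution (i : W →ₗ[𝕜] H) (X G : Submodule 𝕜 W) (lam : 𝕜) (x g : W) : Prop :=
  (∀ x' ∈ X, ⟪x, x'⟫_𝕜 - ⟪i x, i x'⟫_𝕜 = ⟪lam • i (x + g), i x'⟫_𝕜) ∧
    ∀ g' ∈ G, ⟪i (x + g), i g'⟫_𝕜 = 0

variable {i : W →ₗ[𝕜] H} {V X G : Submodule 𝕜 W} {f : H} {lam : 𝕜} {u u' v w x g ξ : W}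

theorem mem_variationalTestSpace :
    v ∈ variationalTestSpace i f u ↔ ⟪u, v⟫_𝕜 = ⟪f, i v⟫_𝕜 :=
  Iff.rfl

theorem mem_discreteDivFree :
    w ∈ discreteDivFree i X G ↔ w ∈ X ⊔ G ∧ ∀ g ∈ G, ⟪i w, i g⟫_𝕜 = 0 := by
  simp only [discreteDivFree, Submodule.mem_inf, Submodule.mem_comap, Submodule.mem_orthogonal',
    Submodule.mem_map, forall_exists_index, and_imp, forall_apply_eq_imp_iff₂]

theorem isVariationalSolution_discreteDivFree_iff :
    IsVariationalSolution i (discreteDivFree i X G) f u ↔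
      (u ∈ X ⊔ G ∧ ∀ g ∈ G, ⟪i u, i g⟫_𝕜 = 0) ∧
        ∀ v ∈ X ⊔ G, (∀ g ∈ G, ⟪i v, i g⟫_𝕜 = 0) → ⟪u, v⟫_𝕜 = ⟪f, i v⟫_𝕜 := by
  simp only [IsVariationalSolution, SetLike.le_def, mem_discreteDivFree,
    mem_variationalTestSpace, and_imp]

namespace IsVariationalSolution

theorem const_smul (hu : IsVariationalSolution i V f u) (c : 𝕜) :
    IsVariationalSolution i V (c • f) (c • u) := by
  refine ⟨V.smul_mem c hu.1, fun v hv => ?_⟩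
  rw [mem_variationalTestSpace, inner_smul_left, inner_smul_left,
    mem_variationalTestSpace.1 (hu.2 hv)]

theorem unique (hu : IsVariationalSolution i V f u) (hu' : IsVariationalSolution i V f u') :
    u = u' := by
  have hsub : u - u' ∈ V := V.sub_mem hu.1 hu'.1
  rw [← sub_eq_zero, ← inner_self_eq_zero (𝕜 := 𝕜), inner_sub_left,
    mem_variationalTestSpace.1 (hu.2 hsub), mem_variationalTestSpace.1 (hu'.2 hsub), sub_self]

theorem smul_iff (hu : IsVariationalSolution i V f u) (c : 𝕜) :
    IsVariationalSolution i V (c • f) u' ↔ u' = c • u :=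
  ⟨fun hu' => hu'.unique (hu.const_smul c), fun h => h ▸ hu.const_smul c⟩

end IsVariationalSolution

namespace IsGradientType

theorem inner_left (hG : IsGradientType i G) (hg : g ∈ G) (w : W) : ⟪g, w⟫_𝕜 = ⟪i g, i w⟫_𝕜 := by
  rw [← inner_conj_symm, hG w g hg, inner_conj_symm]

theorem inner_sub_inner_add_left (hG : IsGradientType i G) (hg : g ∈ G) (x w : W) :
    ⟪x + g, w⟫_𝕜 - ⟪i (x + g), i w⟫_𝕜 = ⟪x, w⟫_𝕜 - ⟪i x, i w⟫_𝕜 := by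
  rw [map_add, inner_add_left, inner_add_left, hG.inner_left hg, add_sub_add_right_eq_sub]

theorem discreteDivFree_eq_orthogonal_inf (hG : IsGradientType i G) :
    discreteDivFree i X G = Gᗮ ⊓ (X ⊔ G) := by
  ext w
  rw [mem_discreteDivFree, Submodule.mem_inf, Submodule.mem_orthogonal', and_comm]
  exact and_congr_left' (forall₂_congr fun g hg => by rw [hG w g hg])

theorem sup_discreteDivFree (hG : IsGradientType i G) [G.HasOrthogonalProjection] :
    G ⊔ discreteDivFree i X G = X ⊔ G := by
  rw [hG.discreteDivFree_eq_orthogonal_inf,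
    Submodule.sup_orthogonal_inf_of_hasOrthogonalProjection le_sup_right]

theorem le_variationalTestSpace (hG : IsGradientType i G) (hξ : ∀ g ∈ G, ⟪i ξ, i g⟫_𝕜 = 0) (c : 𝕜) :
    G ≤ variationalTestSpace i (c • i ξ) ξ := fun g hg => by
  rw [mem_variationalTestSpace, hG ξ g hg, inner_smul_left, hξ g hg, mul_zero]

theorem discreteDivFree_le_iff (hG : IsGradientType i G) [G.HasOrthogonalProjection]
    {T : Submodule 𝕜 W} (hT : G ≤ T) : discreteDivFree i X G ≤ T ↔ X ≤ T := by
  calc discreteDivFree i X G ≤ T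
    _ ↔ G ⊔ discreteDivFree i X G ≤ T := by rw [sup_le_iff, and_iff_right hT]
    _ ↔ X ⊔ G ≤ T := by rw [hG.sup_discreteDivFree]
    _ ↔ X ≤ T := by rw [sup_le_iff, and_iff_left hT]

theorem mixed_equation_iff_mem_variationalTestSpace (hG : IsGradientType i G) (hg : g ∈ G) :
    ⟪x, w⟫_𝕜 - ⟪i x, i w⟫_𝕜 = ⟪lam • i (x + g), i w⟫_𝕜 ↔
      w ∈ variationalTestSpace i ((lam + 1) • i (x + g)) (x + g) := by
  rw [mem_variationalTestSpace, ← hG.inner_sub_inner_add_left hg, add_smul, one_smul,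
    inner_add_left (lam • i (x + g)), sub_eq_iff_eq_add]

theorem isMixedSolution_iff_isVariationalSolution (hG : IsGradientType i G)
    [G.HasOrthogonalProjection] (hx : x ∈ X) (hg : g ∈ G) :
    IsMixedSolution i X G lam x g ↔
      IsVariationalSolution i (discreteDivFree i X G) ((lam + 1) • i (x + g)) (x + g) := by
  rw [IsMixedSolution, IsVariationalSolution, mem_discreteDivFree,
    and_iff_right (Submodule.add_mem_sup hx hg), and_comm]
  refine and_congr_right fun horth => ?_
  rw [hG.discreteDivFree_le_iff (hG.le_variationalTestSpace horth _)]
  exact forall₂_congr fun _ _ => hG.mixed_equation_iff_mem_variationalTestSpace hg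

end IsGradientType

theorem stmt_4_general (hG : IsGradientType i G) [G.HasOrthogonalProjection]
    (hinj : Set.InjOn i (discreteDivFree i X G)) (hlam : lam ≠ -1) (hx : x ∈ X) (hg : g ∈ G)
    (hu : IsVariationalSolution i (discreteDivFree i X G) (i (x + g)) u) :
    IsMixedSolution i X G lam x g ↔
      x + g ∈ discreteDivFree i X G ∧ i u = (lam + 1)⁻¹ • i (x + g) := by
  have hlam' : lam + 1 ≠ 0 := mt eq_neg_of_add_eq_zero_left hlam
  rw [hG.isMixedSolution_iff_isVariationalSolution hx hg, hu.smul_iff]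
  constructor
  · intro hξ
    refine ⟨hξ ▸ Submodule.smul_mem _ _ hu.1, ?_⟩
    rw [← map_smul, ← (eq_inv_smul_iff₀ hlam').2 hξ.symm]
  · rintro ⟨hmem, heq⟩
    rw [← map_smul] at heq
    exact ((eq_inv_smul_iff₀ hlam').1 (hinj hu.1 (Submodule.smul_mem _ _ hmem) heq)).symm

end Galerkin

/-- Let `H`, `W` be real Hilbert spaces, `i : W → H` continuous linear,
injective, with `‖i w‖ ≤ ‖w‖`; `b(u, v) := ⟪u, v⟫_W − ⟪i u, i v⟫_H`.  Let `G` be a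
gradient-type closed subspace (`⟪w, g⟫_W = ⟪i w, i g⟫_H` for `w ∈ W`, `g ∈ G`),
`Xn ≤ W` and `Gn ≤ G` finite-dimensional, `Vn := {w ∈ Xn + Gn : ⟪i w, i g⟫ = 0 ∀ g ∈ Gn}`,
and `un f ∈ Vn` the Riesz representative for `R_n = R_{Vn}`.  Let `λ ≠ −1`, `x ∈ Xn`,
`g ∈ Gn` with `ξ := x + g ≠ 0`.  Then `(λ, x, g)` solves the discrete mixed eigenvalue
problem iff `ξ ∈ Vn` and `R_n (i ξ) = (λ + 1)⁻¹ • (i ξ)`. -/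
theorem stmt_4
    {H W : Type*} [NormedAddCommGroup H] [InnerProductSpace ℝ H] [CompleteSpace H]
    [NormedAddCommGroup W] [InnerProductSpace ℝ W] [CompleteSpace W]
    (i : W →L[ℝ] H) (hi : ∀ w : W, ‖i w‖ ≤ ‖w‖) (hinj : Function.Injective i)
    (G : Submodule ℝ W) (hGclosed : IsClosed (G : Set W))
    (hG : ∀ w : W, ∀ g ∈ G, ⟪w, g⟫_ℝ = ⟪i w, i g⟫_ℝ)
    (Xn : Submodule ℝ W) (hXnfin : FiniteDimensional ℝ Xn)
    (Gn : Submodule ℝ W) (hGnG : Gn ≤ G) (hGnfin : FiniteDimensional ℝ Gn)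
    (un : H → W)
    (hunmem : ∀ f : H, un f ∈ Xn ⊔ Gn)
    (hunorth : ∀ f : H, ∀ g ∈ Gn, ⟪i (un f), i g⟫_ℝ = 0)
    (hun : ∀ f : H, ∀ v ∈ Xn ⊔ Gn, (∀ g ∈ Gn, ⟪i v, i g⟫_ℝ = 0) →
      ⟪un f, v⟫_ℝ = ⟪f, i v⟫_ℝ)
    (lam : ℝ) (hlam : lam ≠ -1)
    (x : W) (hx : x ∈ Xn) (g : W) (hg : g ∈ Gn) (hne : x + g ≠ 0) :
    ((∀ x' ∈ Xn, ⟪x, x'⟫_ℝ - ⟪i x, i x'⟫_ℝ = lam * ⟪i (x + g), i x'⟫_ℝ) ∧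
        (∀ g' ∈ Gn, ⟪i (x + g), i g'⟫_ℝ = 0)) ↔
      ((x + g ∈ Xn ⊔ Gn ∧ ∀ g' ∈ Gn, ⟪i (x + g), i g'⟫_ℝ = 0) ∧
        i (un (i (x + g))) = (lam + 1)⁻¹ • (i (x + g))) := by
  have hu : IsVariationalSolution i.toLinearMap (discreteDivFree i.toLinearMap Xn Gn)
      (i (x + g)) (un (i (x + g))) :=
    isVariationalSolution_discreteDivFree_iff.2 ⟨⟨hunmem _, hunorth _⟩, hun _⟩
  simpa only [IsMixedSolution, mem_discreteDivFree, real_inner_smul_left,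
    ContinuousLinearMap.coe_coe] using
    stmt_4_general (fun w g hg => hG w g (hGnG hg)) hinj.injOn hlam hx hg hu
end

section
/- Fix finite-dimensional subspaces X_n of W and G_n of G, and assume the abstract discrete exact sequence property: every x ∈ X_n with b(x, x) = 0 belongs to G_n. Then every eigenvalue of the discrete mixed eigenvalue problem is positive: if λ ∈ ℝ, x ∈ X_n and g ∈ G_n with x + g ≠ 0 solve the problem, then λ > 0. -/
open scoped InnerProductSpace

/-!
Testing the eigenvalue equation with `x' = x`, and using that `x + g` is mass-orthogonal to `g`,
gives the Rayleigh identity `b(x, x) = λ ‖i (x + g)‖²`. The left side is nonnegative, and it cannot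
vanish: otherwise exactness puts `x + g` in `Gn`, where it is orthogonal to itself, and `i` is
isometric on gradients, so `x + g = 0`.
-/

section MixedEigenpair

variable {R V : Type*} [CommSemiring R] [AddCommMonoid V] [Module R V] {σ₁ σ₂ : R →+* R}

/-- Eigenpairs of the discrete mixed eigenvalue problem with stiffness form `b`, mass form `m`,
field space `X` and gradient space `G`. The eigenvector `x + g` is recorded through its two parts,
since only `x` enters the stiffness form; `σ₁` and `σ₂` allow either convention for complex
sesquilinear forms. -/
structure IsMixedEigenpair (b m : V →ₛₗ[σ₁] V →ₛₗ[σ₂] R) (X G : Submodule R V)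
    (μ : R) (x g : V) : Prop where
  field_mem : x ∈ X
  gradient_mem : g ∈ G
  add_ne_zero : x + g ≠ 0
  stiffness_eq : ∀ x' ∈ X, b x x' = μ * m (x + g) x'
  mass_orthogonal : ∀ g' ∈ G, m (x + g) g' = 0

namespace IsMixedEigenpair

variable {b m : V →ₛₗ[σ₁] V →ₛₗ[σ₂] R} {X G : Submodule R V} {μ : R} {x g : V}

lemma stiffness_self_eq_mul_mass_self (h : IsMixedEigenpair b m X G μ x g) :
    b x x = μ * m (x + g) (x + g) := by
  have mass_add : m (x + g) (x + g) = m (x + g) x := by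
    rw [map_add (m (x + g)) x g, h.mass_orthogonal g h.gradient_mem, add_zero]
  rw [mass_add, h.stiffness_eq x h.field_mem]

lemma stiffness_self_ne_zero (h : IsMixedEigenpair b m X G μ x g)
    (exact_seq : ∀ y ∈ X, b y y = 0 → y ∈ G) (definite : ∀ y ∈ G, m y y = 0 → y = 0) :
    b x x ≠ 0 := by
  intro stiffness_zero
  have add_mem : x + g ∈ G := G.add_mem (exact_seq x h.field_mem stiffness_zero) h.gradient_mem
  exact h.add_ne_zero (definite _ add_mem (h.mass_orthogonal _ add_mem))

end IsMixedEigenpair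

theorem stmt_5_general [PartialOrder R] [MulPosReflectLT R]
    {b m : V →ₛₗ[σ₁] V →ₛₗ[σ₂] R} {X G : Submodule R V} {μ : R} {x g : V}
    (h : IsMixedEigenpair b m X G μ x g) (hb : b.IsNonneg) (hm : m.IsNonneg)
    (exact_seq : ∀ y ∈ X, b y y = 0 → y ∈ G) (definite : ∀ y ∈ G, m y y = 0 → y = 0) :
    0 < μ := by
  have stiffness_pos : 0 < b x x :=
    (hb.nonneg x).lt_of_ne' (h.stiffness_self_ne_zero exact_seq definite)
  rw [h.stiffness_self_eq_mul_mass_self] at stiffness_pos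
  exact pos_of_mul_pos_left stiffness_pos (hm.nonneg (x + g))

end MixedEigenpair

section EnergyForms

variable {H W : Type*} [SeminormedAddCommGroup H] [InnerProductSpace ℝ H]

/-- The mass form `⟪i u, i v⟫` on `W`, the inner product of `H` pulled back along `i`. -/
noncomputable def massForm [AddCommGroup W] [Module ℝ W] (i : W →ₗ[ℝ] H) :
    W →ₗ[ℝ] W →ₗ[ℝ] ℝ :=
  (innerₗ H).compl₁₂ i i

lemma isNonneg_massForm [AddCommGroup W] [Module ℝ W] (i : W →ₗ[ℝ] H) : (massForm i).IsNonneg :=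
  ⟨fun w ↦ real_inner_self_nonneg (x := i w)⟩

/-- The abstract curl–curl form `⟪u, v⟫ - ⟪i u, i v⟫` on `W`: for `W = H₀(curl; Ω)` and `i` the
inclusion into `L²`, it is `(∇ × u, ∇ × v)`. -/
noncomputable def curlCurlForm [SeminormedAddCommGroup W] [InnerProductSpace ℝ W]
    (i : W →ₗ[ℝ] H) : W →ₗ[ℝ] W →ₗ[ℝ] ℝ :=
  innerₗ W - massForm i

lemma isNonneg_curlCurlForm [SeminormedAddCommGroup W] [InnerProductSpace ℝ W]
    {i : W →ₗ[ℝ] H} (hi : ∀ w, ‖i w‖ ≤ ‖w‖) : (curlCurlForm i).IsNonneg where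
  nonneg w := by
    change 0 ≤ ⟪w, w⟫_ℝ - ⟪i w, i w⟫_ℝ
    rw [real_inner_self_eq_norm_sq, real_inner_self_eq_norm_sq, sub_nonneg]
    gcongr
    exact hi w

lemma eq_zero_of_massForm_self_eq_zero [NormedAddCommGroup W] [InnerProductSpace ℝ W]
    {i : W →ₗ[ℝ] H} {w : W} (hw : ⟪w, w⟫_ℝ = ⟪i w, i w⟫_ℝ) (mass_zero : massForm i w w = 0) :
    w = 0 :=
  inner_self_eq_zero.mp (hw.trans mass_zero)

end EnergyForms

/-- Let `H`, `W` be real Hilbert spaces, `i : W → H` continuous linear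
with `‖i w‖ ≤ ‖w‖`; `b(u, v) := ⟪u, v⟫_W − ⟪i u, i v⟫_H`.  Let `G` be a gradient-type
closed subspace (`⟪w, g⟫_W = ⟪i w, i g⟫_H` for `w ∈ W`, `g ∈ G`), and `Xn ≤ W`, `Gn ≤ G`
finite-dimensional subspaces satisfying the abstract discrete exact sequence property:
every `x ∈ Xn` with `b(x, x) = 0` belongs to `Gn`.  Then every eigenvalue of the discrete
mixed eigenvalue problem is positive: if `λ ∈ ℝ`, `x ∈ Xn`, `g ∈ Gn` with `x + g ≠ 0`
solve the problem, then `λ > 0`. -/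
theorem stmt_5
    {H W : Type*} [NormedAddCommGroup H] [InnerProductSpace ℝ H] [CompleteSpace H]
    [NormedAddCommGroup W] [InnerProductSpace ℝ W] [CompleteSpace W]
    (i : W →L[ℝ] H) (hi : ∀ w : W, ‖i w‖ ≤ ‖w‖)
    (G : Submodule ℝ W) (hGclosed : IsClosed (G : Set W))
    (hG : ∀ w : W, ∀ g ∈ G, ⟪w, g⟫_ℝ = ⟪i w, i g⟫_ℝ)
    (Xn : Submodule ℝ W) (hXnfin : FiniteDimensional ℝ Xn)
    (Gn : Submodule ℝ W) (hGnG : Gn ≤ G) (hGnfin : FiniteDimensional ℝ Gn)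
    (hexact : ∀ x ∈ Xn, ⟪x, x⟫_ℝ - ⟪i x, i x⟫_ℝ = 0 → x ∈ Gn)
    (lam : ℝ) (x : W) (hx : x ∈ Xn) (g : W) (hg : g ∈ Gn) (hne : x + g ≠ 0)
    (heig : ∀ x' ∈ Xn, ⟪x, x'⟫_ℝ - ⟪i x, i x'⟫_ℝ = lam * ⟪i (x + g), i x'⟫_ℝ)
    (hconstraint : ∀ g' ∈ Gn, ⟪i (x + g), i g'⟫_ℝ = 0) :
    0 < lam := by
  have gradient_definite : ∀ y ∈ Gn, massForm i.toLinearMap y y = 0 → y = 0 := fun y hy ↦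
    eq_zero_of_massForm_self_eq_zero (hG y y (hGnG hy))
  have eigenpair : IsMixedEigenpair (curlCurlForm i.toLinearMap) (massForm i.toLinearMap)
      Xn Gn lam x g := ⟨hx, hg, hne, heig, hconstraint⟩
  exact stmt_5_general eigenpair (isNonneg_curlCurlForm hi) (isNonneg_massForm i.toLinearMap)
    hexact gradient_definite
end

section
/- Fix finite-dimensional subspaces X_n of W and G_n of G, and assume that for every x ∈ X_n there exists g ∈ G with x + g ∈ V. Let f ∈ H satisfy ⟨f, i g⟩_H = 0 for all g ∈ G. Then, writing u := u_V(f) and u_n := u_{V_n}(f) for the elements representing R_V f = i u and R_{V_n} f = i u_n, one has ⟨u − u_n, m⟩_W = 0 for every m ∈ X_n + G_n; that is, u − u_n is W-orthogonal to the sum space X_n + G_n. -/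
open scoped InnerProductSpace

/-!
Let `ℓ m = ⟪f, i m⟫`. On a gradient-type subspace `G`, a solution `u` lying in `V ⊆ Gᗮ` satisfies
`⟪u, g⟫ = ⟪i u, i g⟫ = 0`, and `ℓ g = 0` by the assumption on `f`. Hence testing against `V` is the
same as testing against `V ⊔ G`. Both the exact and the discrete solution therefore represent `ℓ`
on `Xn ⊔ Gn`: this space lies in `V ⊔ G` by the correction property, and it equals `Vn ⊔ Gn` by
orthogonal projection onto `Gn`.
-/

section GradientType

variable {𝕜 H W : Type*} [RCLike 𝕜] [NormedAddCommGroup H] [InnerProductSpace 𝕜 H]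
  [NormedAddCommGroup W] [InnerProductSpace 𝕜 W]

/-- The elements of `W` that are weakly divergence-free against `G`, that is, `H`-orthogonal to
`G`. The space `V` is `weaklyDivFree i G`, and `Vn` is `(Xn ⊔ Gn) ⊓ weaklyDivFree i Gn`. -/
def weaklyDivFree (i : W →ₗ[𝕜] H) (G : Submodule 𝕜 W) : Submodule 𝕜 W :=
  (G.map i)ᗮ.comap i

/-- `u` is the Riesz representative `u_V(f)` in `V` of the functional `v ↦ ⟪f, i v⟫`. It is a
predicate, so that `V` need not be complete. -/
structure IsRieszSolution (i : W →ₗ[𝕜] H) (f : H) (V : Submodule 𝕜 W) (u : W) : Prop where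
  mem : u ∈ V
  inner_eq : ∀ v ∈ V, ⟪u, v⟫_𝕜 = ⟪f, i v⟫_𝕜

variable {i : W →ₗ[𝕜] H} {G V : Submodule 𝕜 W} {f : H} {u un : W}

theorem mem_weaklyDivFree {w : W} : w ∈ weaklyDivFree i G ↔ ∀ g ∈ G, ⟪i w, i g⟫_𝕜 = 0 := by
  simp only [weaklyDivFree, Submodule.mem_comap, Submodule.mem_orthogonal', Submodule.mem_map,
    forall_exists_index, and_imp, forall_apply_eq_imp_iff₂]

theorem IsGradientType.mono {K : Submodule 𝕜 W} (hG : IsGradientType i G) (hKG : K ≤ G) :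
    IsGradientType i K :=
  fun w g hg => hG w g (hKG hg)

theorem IsRieszSolution.inner_eq_of_mem_sup (hu : IsRieszSolution i f V u)
    (hG : IsGradientType i G) (hVG : V ≤ weaklyDivFree i G) (hf : ∀ g ∈ G, ⟪f, i g⟫_𝕜 = 0)
    {m : W} (hm : m ∈ V ⊔ G) : ⟪u, m⟫_𝕜 = ⟪f, i m⟫_𝕜 := by
  obtain ⟨v, hv, g, hg, rfl⟩ := Submodule.mem_sup.1 hm
  have inner_u_g : ⟪u, g⟫_𝕜 = 0 :=
    (hG u g hg).trans (mem_weaklyDivFree.1 (hVG hu.mem) g hg)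
  rw [map_add, inner_add_right, inner_add_right, hu.inner_eq v hv, inner_u_g, hf g hg]

theorem IsGradientType.weaklyDivFree_eq_orthogonal (hG : IsGradientType i G) :
    weaklyDivFree i G = Gᗮ := by
  ext w
  rw [mem_weaklyDivFree, Submodule.mem_orthogonal']
  exact forall₂_congr fun g hg => by rw [hG w g hg]

theorem IsGradientType.inf_weaklyDivFree_sup_eq [G.HasOrthogonalProjection]
    (hG : IsGradientType i G) {M : Submodule 𝕜 W} (hGM : G ≤ M) :
    M ⊓ weaklyDivFree i G ⊔ G = M := by
  rw [hG.weaklyDivFree_eq_orthogonal, inf_comm, sup_comm,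
    Submodule.sup_orthogonal_inf_of_hasOrthogonalProjection hGM]

theorem stmt_7_general (hG : IsGradientType i G) {X Gn : Submodule 𝕜 W}
    [Gn.HasOrthogonalProjection] (hGnG : Gn ≤ G) (hX : X ≤ weaklyDivFree i G ⊔ G)
    (hf : ∀ g ∈ G, ⟪f, i g⟫_𝕜 = 0)
    (hu : IsRieszSolution i f (weaklyDivFree i G) u)
    (hun : IsRieszSolution i f ((X ⊔ Gn) ⊓ weaklyDivFree i Gn) un) :
    ∀ m ∈ X ⊔ Gn, ⟪u - un, m⟫_𝕜 = 0 := by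
  intro m hm
  have hGn : IsGradientType i Gn := hG.mono hGnG
  have exact_eq : ⟪u, m⟫_𝕜 = ⟪f, i m⟫_𝕜 :=
    hu.inner_eq_of_mem_sup hG le_rfl hf (sup_le hX (hGnG.trans le_sup_right) hm)
  have discrete_eq : ⟪un, m⟫_𝕜 = ⟪f, i m⟫_𝕜 :=
    hun.inner_eq_of_mem_sup hGn inf_le_right (fun g hg => hf g (hGnG hg))
      ((hGn.inf_weaklyDivFree_sup_eq le_sup_right).ge hm)
  rw [inner_sub_left, exact_eq, discrete_eq, sub_self]

end GradientType

/-- Setting: `H`, `W` real Hilbert spaces, `i : W → H` continuous linear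
with `‖i w‖ ≤ ‖w‖`, `G` a gradient-type closed subspace,
`V := {w : ∀ g ∈ G, ⟪i w, i g⟫ = 0}` and, for finite-dimensional `Xn ≤ W`, `Gn ≤ G`,
`Vn := {w ∈ Xn + Gn : ∀ g ∈ Gn, ⟪i w, i g⟫ = 0}`.  Assume every `x ∈ Xn` can be
corrected by some `g ∈ G` so that `x + g ∈ V`.  Let `f ∈ H` satisfy `⟪f, i g⟫ = 0` for
all `g ∈ G`, and let `u := u_V(f)`, `un := u_{Vn}(f)` be the Riesz representatives with
`R_V f = i u`, `R_{Vn} f = i un`.  Then `⟪u − un, m⟫_W = 0` for every `m ∈ Xn + Gn`. -/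
theorem stmt_7
    {H W : Type*} [NormedAddCommGroup H] [InnerProductSpace ℝ H] [CompleteSpace H]
    [NormedAddCommGroup W] [InnerProductSpace ℝ W] [CompleteSpace W]
    (i : W →L[ℝ] H) (hi : ∀ w : W, ‖i w‖ ≤ ‖w‖)
    (G : Submodule ℝ W) (hGclosed : IsClosed (G : Set W))
    (hG : ∀ w : W, ∀ g ∈ G, ⟪w, g⟫_ℝ = ⟪i w, i g⟫_ℝ)
    (Xn : Submodule ℝ W) (hXnfin : FiniteDimensional ℝ Xn)
    (Gn : Submodule ℝ W) (hGnG : Gn ≤ G) (hGnfin : FiniteDimensional ℝ Gn)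
    (hcorrect : ∀ x ∈ Xn, ∃ g ∈ G, ∀ g' ∈ G, ⟪i (x + g), i g'⟫_ℝ = 0)
    (f : H) (hf : ∀ g ∈ G, ⟪f, i g⟫_ℝ = 0)
    (u : W) (humem : ∀ g ∈ G, ⟪i u, i g⟫_ℝ = 0)
    (hu : ∀ v : W, (∀ g ∈ G, ⟪i v, i g⟫_ℝ = 0) → ⟪u, v⟫_ℝ = ⟪f, i v⟫_ℝ)
    (un : W) (hunmem : un ∈ Xn ⊔ Gn) (hunorth : ∀ g ∈ Gn, ⟪i un, i g⟫_ℝ = 0)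
    (hun : ∀ v ∈ Xn ⊔ Gn, (∀ g ∈ Gn, ⟪i v, i g⟫_ℝ = 0) → ⟪un, v⟫_ℝ = ⟪f, i v⟫_ℝ) :
    ∀ m ∈ Xn ⊔ Gn, ⟪u - un, m⟫_ℝ = 0 := by
  have hX : Xn ≤ weaklyDivFree (i : W →ₗ[ℝ] H) G ⊔ G := fun x hx =>
    let ⟨_, hg, hxg⟩ := hcorrect x hx
    (Submodule.add_mem_iff_left _ (Submodule.mem_sup_right hg)).1
      (Submodule.mem_sup_left (mem_weaklyDivFree.2 hxg))
  exact stmt_7_general hG hGnG hX hf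
    ⟨mem_weaklyDivFree.2 humem, fun v hv => hu v (mem_weaklyDivFree.1 hv)⟩
    ⟨⟨hunmem, mem_weaklyDivFree.2 hunorth⟩,
      fun v hv => hun v hv.1 (mem_weaklyDivFree.1 hv.2)⟩
end

section
/- For each n ∈ ℕ let V_n be a finite-dimensional subspace of W and set R_n := R_{V_n}. Assume the discrete compactness property: for every strictly increasing sequence (n_k) of natural numbers and every sequence (ξ_k) with ξ_k ∈ V_{n_k} for all k and sup_k ‖ξ_k‖_W < ∞, the sequence (i ξ_k) has a subsequence converging in H. Then the family (R_n)_{n∈ℕ} is collectively compact: for every bounded set B ⊆ H, the closure in H of ⋃_{n∈ℕ} R_n(B) is compact. -/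
open scoped InnerProductSpace
open Filter Topology

/-!
The norm of the Galerkin solution `u n f` is at most `‖i‖ * ‖f‖`, so the images of a bounded set lie
in the union over `n` of the `i`-images of a fixed ball of `V n`. A sequence in that union either
returns infinitely often to one `V n`, where the compactness of `i` on `V n` applies, or has a
subsequence whose indices are strictly increasing, where discrete compactness applies.
-/

/-- Collective compactness of a family of (not necessarily linear) maps: the images of a bounded set
under all members of the family lie in a common compact set, namely the closure of their union. -/
def IsCollectivelyCompact {ι E F : Type*} [Bornology E] [TopologicalSpace F] (T : ι → E → F) :
    Prop :=
  ∀ B : Set E, Bornology.IsBounded B → IsCompact (closure (⋃ n, T n '' B))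

/-- The discrete compactness property of a family `V` of subspaces with respect to `i`. Only
sequences whose indices are strictly increasing are tested, so nothing is required of a single
`V n`. -/
def IsDiscretelyCompact {ι 𝕜 W H : Type*} [Preorder ι] [Semiring 𝕜] [SeminormedAddCommGroup W]
    [Module 𝕜 W] [TopologicalSpace H] (i : W → H) (V : ι → Submodule 𝕜 W) : Prop :=
  ∀ nk : ℕ → ι, StrictMono nk → ∀ ξ : ℕ → W, (∀ k, ξ k ∈ V (nk k)) → (∃ C : ℝ, ∀ k, ‖ξ k‖ ≤ C) →
    ∃ φ : ℕ → ℕ, StrictMono φ ∧ ∃ l : H, Tendsto (fun k => i (ξ (φ k))) atTop (𝓝 l)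

theorem exists_strictMono_subseq_const_or_strictMono {ι : Type*} [LinearOrder ι] [WellFoundedLT ι]
    (m : ℕ → ι) :
    ∃ φ : ℕ → ℕ, StrictMono φ ∧ ((∃ n, ∀ k, m (φ k) = n) ∨ StrictMono (m ∘ φ)) := by
  obtain ⟨g, hlt | hnlt⟩ := exists_increasing_or_nonincreasing_subseq (· < ·) m
  · exact ⟨g, g.strictMono, Or.inr hlt⟩
  · have hanti : Antitone (m ∘ g) := antitone_iff_forall_lt.2 fun a b hab => not_lt.1 (hnlt a b hab)
    obtain ⟨N, hN⟩ := WellFoundedLT.antitone_chain_condition hanti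
    exact ⟨fun k => g (N + k), g.strictMono.comp fun _ _ h => Nat.add_lt_add_left h N,
      Or.inl ⟨m (g N), fun k => (hN _ (Nat.le_add_right N k)).symm⟩⟩

section RelativeCompactness

variable {X : Type*} [PseudoMetricSpace X]

theorem isCompact_closure_of_forall_exists_tendsto_subseq {s : Set X}
    (hs : ∀ x : ℕ → X, (∀ k, x k ∈ s) →
      ∃ φ : ℕ → ℕ, StrictMono φ ∧ ∃ a, Tendsto (x ∘ φ) atTop (𝓝 a)) :
    IsCompact (closure s) := by
  refine IsSeqCompact.isCompact fun x hx => ?_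
  have hnear (k : ℕ) : ∃ y ∈ s, dist (x k) y < 1 / ((k : ℝ) + 1) :=
    Metric.mem_closure_iff.1 (hx k) _ Nat.one_div_pos_of_nat
  choose y hys hxy using hnear
  obtain ⟨φ, hφ, a, hya⟩ := hs y hys
  have hdist : Tendsto (fun k => dist (y k) (x k)) atTop (𝓝 0) :=
    squeeze_zero (fun _ => dist_nonneg) (fun k => (dist_comm (y k) (x k)).trans_le (hxy k).le)
      tendsto_one_div_add_atTop_nhds_zero_nat
  have hxa : Tendsto (x ∘ φ) atTop (𝓝 a) :=
    (tendsto_iff_of_dist (hdist.comp hφ.tendsto_atTop)).1 hya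
  have ha : a ∈ closure s :=
    isClosed_closure.mem_of_tendsto hxa (Eventually.of_forall fun k => hx (φ k))
  exact ⟨a, ha, φ, hφ, hxa⟩

theorem isCompact_closure_iUnion_of_strictMono {ι : Type*} [LinearOrder ι] [WellFoundedLT ι]
    {K : ι → Set X} (hK : ∀ n, IsCompact (closure (K n)))
    (hmono : ∀ nk : ℕ → ι, StrictMono nk → ∀ x : ℕ → X, (∀ k, x k ∈ K (nk k)) →
      ∃ φ : ℕ → ℕ, StrictMono φ ∧ ∃ a, Tendsto (x ∘ φ) atTop (𝓝 a)) :
    IsCompact (closure (⋃ n, K n)) := by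
  refine isCompact_closure_of_forall_exists_tendsto_subseq fun x hx => ?_
  choose m hm using fun k => Set.mem_iUnion.1 (hx k)
  obtain ⟨φ, hφ, ⟨n, hn⟩ | hmφ⟩ := exists_strictMono_subseq_const_or_strictMono m
  · have hmem (k : ℕ) : x (φ k) ∈ closure (K n) := subset_closure (hn k ▸ hm (φ k))
    obtain ⟨a, -, ψ, hψ, ha⟩ := (hK n).isSeqCompact hmem
    exact ⟨φ ∘ ψ, hφ.comp hψ, a, ha⟩
  · obtain ⟨ψ, hψ, a, ha⟩ := hmono (m ∘ φ) hmφ (x ∘ φ) fun k => hm (φ k)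
    exact ⟨φ ∘ ψ, hφ.comp hψ, a, ha⟩

end RelativeCompactness

section DiscreteCompactness

variable {ι 𝕜 W H : Type*} [LinearOrder ι] [WellFoundedLT ι] [NontriviallyNormedField 𝕜]
  [SeminormedAddCommGroup W] [NormedSpace 𝕜 W] [SeminormedAddCommGroup H] [NormedSpace 𝕜 H]
  {i : W →L[𝕜] H} {V : ι → Submodule 𝕜 W}

theorem IsDiscretelyCompact.isCompact_closure_iUnion_image (hV : IsDiscretelyCompact i V)
    (hcomp : ∀ n, IsCompactOperator (i ∘L (V n).subtypeL)) (C : ℝ) :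
    IsCompact (closure (⋃ n, i '' {w ∈ V n | ‖w‖ ≤ C})) := by
  refine isCompact_closure_iUnion_of_strictMono (fun n => ?_) fun nk hnk x hx => ?_
  · obtain ⟨K, hK, hCK⟩ := (hcomp n).image_closedBall_subset_compact C
    refine hK.closure_of_subset ?_
    rintro _ ⟨w, ⟨hwV, hwC⟩, rfl⟩
    exact hCK ⟨⟨w, hwV⟩, mem_closedBall_zero_iff.2 hwC, rfl⟩
  · choose ξ hξ hξx using hx
    obtain rfl : (fun k => i (ξ k)) = x := funext hξx
    exact hV nk hnk ξ (fun k => (hξ k).1) ⟨C, fun k => (hξ k).2⟩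

theorem IsDiscretelyCompact.isCollectivelyCompact {E : Type*} [Bornology E]
    (hV : IsDiscretelyCompact i V) (hcomp : ∀ n, IsCompactOperator (i ∘L (V n).subtypeL))
    {T : ι → E → W} (hTV : ∀ n f, T n f ∈ V n)
    (hT : ∀ B, Bornology.IsBounded B → ∃ C, ∀ n, ∀ f ∈ B, ‖T n f‖ ≤ C) :
    IsCollectivelyCompact fun n f => i (T n f) := by
  intro B hB
  obtain ⟨C, hC⟩ := hT B hB
  refine (hV.isCompact_closure_iUnion_image hcomp C).of_isClosed_subset isClosed_closure
    (closure_mono (Set.iUnion_mono fun n => ?_))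
  rintro _ ⟨f, hf, rfl⟩
  exact ⟨T n f, ⟨hTV n f, hC n f hf⟩, rfl⟩

end DiscreteCompactness

section Galerkin

variable {𝕜 W H : Type*} [RCLike 𝕜] [SeminormedAddCommGroup W] [InnerProductSpace 𝕜 W]
  [SeminormedAddCommGroup H] [InnerProductSpace 𝕜 H]

theorem norm_le_opNorm_mul_norm_of_inner_self_eq (i : W →L[𝕜] H) {w : W} {f : H}
    (h : ⟪w, w⟫_𝕜 = ⟪f, i w⟫_𝕜) : ‖w‖ ≤ ‖i‖ * ‖f‖ := by
  have hmul : ‖w‖ * ‖w‖ ≤ ‖i‖ * ‖f‖ * ‖w‖ :=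
    calc ‖w‖ * ‖w‖ = ‖⟪f, i w⟫_𝕜‖ := by
          rw [← h, ← inner_self_re_eq_norm, inner_self_eq_norm_mul_norm]
      _ ≤ ‖f‖ * ‖i w‖ := norm_inner_le_norm f (i w)
      _ ≤ ‖f‖ * (‖i‖ * ‖w‖) := by gcongr; exact i.le_opNorm w
      _ = ‖i‖ * ‖f‖ * ‖w‖ := by ring
  rcases (norm_nonneg w).eq_or_lt with hw | hw
  · rw [← hw]; positivity
  · exact le_of_mul_le_mul_right hmul hw

theorem stmt_8_general {ι : Type*} [LinearOrder ι] [WellFoundedLT ι] (i : W →L[𝕜] H)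
    (V : ι → Submodule 𝕜 W) (hcomp : ∀ n, IsCompactOperator (i ∘L (V n).subtypeL))
    (u : ι → H → W) (humem : ∀ n f, u n f ∈ V n)
    (hu : ∀ n f, ∀ v ∈ V n, ⟪u n f, v⟫_𝕜 = ⟪f, i v⟫_𝕜) (hV : IsDiscretelyCompact i V) :
    IsCollectivelyCompact fun n f => i (u n f) := by
  refine hV.isCollectivelyCompact hcomp humem fun B hB => ?_
  obtain ⟨C, hC⟩ := hB.exists_norm_le
  refine ⟨‖i‖ * C, fun n f hf => ?_⟩
  calc ‖u n f‖ ≤ ‖i‖ * ‖f‖ :=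
        norm_le_opNorm_mul_norm_of_inner_self_eq i (hu n f (u n f) (humem n f))
    _ ≤ ‖i‖ * C := by gcongr; exact hC f hf

end Galerkin

/-- Let `H`, `W` be real Hilbert spaces, `i : W → H` continuous linear
with `‖i w‖ ≤ ‖w‖`.  For each `n ∈ ℕ` let `Vn n` be a finite-dimensional subspace of `W`
and `Rn := R_{Vn n}` the solution operator given by the Riesz representative `u n f`.
Assume the discrete compactness property: for every strictly increasing `(n_k)` and every
sequence `(ξ_k)` with `ξ_k ∈ Vn (n_k)` and `sup_k ‖ξ_k‖ < ∞`, the sequence `(i ξ_k)` has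
a subsequence converging in `H`.  Then the family `(Rn)` is collectively compact: for
every bounded `B ⊆ H`, the closure in `H` of `⋃ n, Rn '' B` is compact. -/
theorem stmt_8
    {H W : Type*} [NormedAddCommGroup H] [InnerProductSpace ℝ H] [CompleteSpace H]
    [NormedAddCommGroup W] [InnerProductSpace ℝ W] [CompleteSpace W]
    (i : W →L[ℝ] H) (hi : ∀ w : W, ‖i w‖ ≤ ‖w‖)
    (Vn : ℕ → Submodule ℝ W) (hVnfin : ∀ n, FiniteDimensional ℝ (Vn n))
    (u : ℕ → H → W) (humem : ∀ n (f : H), u n f ∈ Vn n)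
    (hu : ∀ n (f : H), ∀ v ∈ Vn n, ⟪u n f, v⟫_ℝ = ⟪f, i v⟫_ℝ)
    (hdc : ∀ nk : ℕ → ℕ, StrictMono nk → ∀ ξ : ℕ → W,
      (∀ k, ξ k ∈ Vn (nk k)) → (∃ C : ℝ, ∀ k, ‖ξ k‖ ≤ C) →
      ∃ φ : ℕ → ℕ, StrictMono φ ∧ ∃ l : H,
        Tendsto (fun k => i (ξ (φ k))) atTop (nhds l)) :
    ∀ B : Set H, Bornology.IsBounded B →
      IsCompact (closure (⋃ n : ℕ, (fun f => i (u n f)) '' B)) := by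
  have hcomp (n : ℕ) : IsCompactOperator (i ∘L (Vn n).subtypeL) :=
    have := hVnfin n
    have : ProperSpace (Vn n) := FiniteDimensional.proper ℝ _
    isCompactOperator_of_locallyCompactSpace_rng _
  exact stmt_8_general i Vn hcomp u humem hu hdc
end

section
/- Let V be a closed subspace of W and, for each n ∈ ℕ, let V_n be a finite-dimensional subspace of W. Assume: (a) for every η ∈ V there exists a sequence (η_n) with η_n ∈ V_n and ‖η − η_n‖_W → 0; (b) for every strictly increasing sequence (n_k) of natural numbers and every sequence (w_k) with w_k ∈ V_{n_k} that converges weakly in W to some g, one has g ∈ V. Then for every f ∈ H, ‖u_V(f) − u_{V_n}(f)‖_W → 0 as n → ∞; in particular, ‖R_V f − R_{V_n} f‖_H → 0, i.e. the operators R_{V_n} converge pointwise on H to R_V. -/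
open scoped InnerProductSpace
open Filter Topology

/-!
Each Riesz representative is the orthogonal projection of one fixed vector `F` (which represents
`w ↦ ⟪f, i w⟫` on all of `W`), so the claim is that Mosco convergence of subspaces forces
convergence of orthogonal projections. Let `p n` and `q` be the projections of `F` onto `Vn n`
and `V`, and let `η n ∈ Vn n` converge to `q`. Since `F - p n ⟂ η n - p n`,
`‖η n - p n‖² = ⟪η n - p n, η n - F⟫`. If `p n` converges weakly to some `g`, which lies in `V` by
hypothesis, the right-hand side is a weak times a strong limit, hence tends to
`⟪q - g, q - F⟫ = 0`. Weak sequential compactness supplies such a `g` along subsequences.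
-/

theorem tendsto_inner_of_tendsto_inner_of_tendsto {𝕜 E ι : Type*} [RCLike 𝕜]
    [SeminormedAddCommGroup E] [InnerProductSpace 𝕜 E] {l : Filter ι} {x y : ι → E} {g z : E}
    {C : ℝ} (hx : ∀ n, ‖x n‖ ≤ C)
    (hxg : ∀ v, Tendsto (fun n ↦ ⟪x n, v⟫_𝕜) l (𝓝 ⟪g, v⟫_𝕜)) (hy : Tendsto y l (𝓝 z)) :
    Tendsto (fun n ↦ ⟪x n, y n⟫_𝕜) l (𝓝 ⟪g, z⟫_𝕜) := by
  have hnorm : Tendsto (fun n ↦ C * ‖y n - z‖) l (𝓝 0) := by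
    simpa only [mul_zero] using (tendsto_iff_norm_sub_tendsto_zero.1 hy).const_mul C
  have herr : Tendsto (fun n ↦ ⟪x n, y n - z⟫_𝕜) l (𝓝 0) :=
    squeeze_zero_norm (fun n ↦ (norm_inner_le_norm _ _).trans
      (mul_le_mul_of_nonneg_right (hx n) (norm_nonneg _))) hnorm
  simpa only [inner_sub_right, add_sub_cancel, add_zero] using (hxg z).add herr

section WeakCompactness

variable {𝕜 E : Type*} [RCLike 𝕜] [NormedAddCommGroup E] [InnerProductSpace 𝕜 E]

theorem exists_subseq_tendsto_inner_of_separable [CompleteSpace E]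
    [TopologicalSpace.SeparableSpace E] {x : ℕ → E} {C : ℝ} (hx : ∀ n, ‖x n‖ ≤ C) :
    ∃ (g : E) (φ : ℕ → ℕ), StrictMono φ ∧
      ∀ y, Tendsto (fun k ↦ ⟪x (φ k), y⟫_𝕜) atTop (𝓝 ⟪g, y⟫_𝕜) := by
  let ℓ : ℕ → WeakDual 𝕜 E := fun n ↦ StrongDual.toWeakDual (InnerProductSpace.toDual 𝕜 E (x n))
  have hℓ (n : ℕ) : ℓ n ∈ WeakDual.toStrongDual ⁻¹' Metric.closedBall (0 : StrongDual 𝕜 E) C :=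
    mem_closedBall_zero_iff.2 (((InnerProductSpace.toDual 𝕜 E).norm_map (x n)).trans_le (hx n))
  obtain ⟨a, -, φ, hφ, ha⟩ := WeakDual.isSeqCompact_closedBall 𝕜 E 0 C hℓ
  refine ⟨(InnerProductSpace.toDual 𝕜 E).symm (WeakDual.toStrongDual a), φ, hφ, fun y ↦ ?_⟩
  rw [InnerProductSpace.toDual_symm_apply]
  exact ((WeakDual.eval_continuous y).tendsto a).comp ha

theorem exists_subseq_tendsto_inner [CompleteSpace E] {x : ℕ → E} {C : ℝ}
    (hx : ∀ n, ‖x n‖ ≤ C) :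
    ∃ (g : E) (φ : ℕ → ℕ), StrictMono φ ∧
      ∀ y, Tendsto (fun k ↦ ⟪x (φ k), y⟫_𝕜) atTop (𝓝 ⟪g, y⟫_𝕜) := by
  let K : Submodule 𝕜 E := (Submodule.span 𝕜 (Set.range x)).topologicalClosure
  have hxK (n : ℕ) : x n ∈ K :=
    Submodule.le_topologicalClosure _ (Submodule.subset_span (Set.mem_range_self n))
  have : CompleteSpace K := (Submodule.isClosed_topologicalClosure _).completeSpace_coe
  have : TopologicalSpace.SeparableSpace K :=
    ((Set.countable_range x).isSeparable.span (R := 𝕜)).closure.separableSpace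
  obtain ⟨g, φ, hφ, hg⟩ :=
    exists_subseq_tendsto_inner_of_separable (𝕜 := 𝕜) (x := fun n ↦ (⟨x n, hxK n⟩ : K)) hx
  refine ⟨g, φ, hφ, fun y ↦ ?_⟩
  simpa only [Submodule.inner_orthogonalProjectionOnto_eq_of_mem_left]
    using hg (K.orthogonalProjectionOnto y)

end WeakCompactness

section Projection

variable {𝕜 E : Type*} [RCLike 𝕜] [NormedAddCommGroup E] [InnerProductSpace 𝕜 E]
  {U : Submodule 𝕜 E} {F p : E}

theorem norm_le_of_mem_of_sub_mem_orthogonal (hp : p ∈ U) (hFp : F - p ∈ Uᗮ) : ‖p‖ ≤ ‖F‖ := by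
  have pythagoras := norm_add_sq_eq_norm_sq_add_norm_sq_of_inner_eq_zero p (F - p)
    (U.inner_right_of_mem_orthogonal hp hFp)
  rw [add_sub_cancel] at pythagoras
  exact nonneg_le_nonneg_of_sq_le_sq (norm_nonneg F)
    (pythagoras ▸ le_add_of_nonneg_right (mul_self_nonneg ‖F - p‖))

theorem inner_sub_self_eq_of_sub_mem_orthogonal {η : E} (hη : η ∈ U) (hp : p ∈ U)
    (hFp : F - p ∈ Uᗮ) : ⟪η - p, η - p⟫_𝕜 = ⟪η - p, η - F⟫_𝕜 := by
  have horth : ⟪η - p, F - p⟫_𝕜 = 0 := U.inner_right_of_mem_orthogonal (U.sub_mem hη hp) hFp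
  rw [← sub_add_sub_cancel η F p, inner_add_right, sub_add_sub_cancel, horth, add_zero]

end Projection

/-- Sequential Mosco convergence of the subspaces `Vn n` to `V`: every vector of `V` is a strong
limit of vectors of the `Vn n`, and weak limits along subsequences of the `Vn n` lie in `V`.
Weak convergence is expressed by testing against inner products. -/
structure MoscoTendsto {𝕜 W : Type*} [RCLike 𝕜] [NormedAddCommGroup W] [InnerProductSpace 𝕜 W]
    (Vn : ℕ → Submodule 𝕜 W) (V : Submodule 𝕜 W) : Prop where
  exists_tendsto : ∀ η ∈ V, ∃ ηn : ℕ → W, (∀ n, ηn n ∈ Vn n) ∧ Tendsto ηn atTop (𝓝 η)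
  mem_of_tendsto_inner : ∀ nk : ℕ → ℕ, StrictMono nk → ∀ w : ℕ → W, (∀ k, w k ∈ Vn (nk k)) →
    ∀ g : W, (∀ y : W, Tendsto (fun k ↦ ⟪w k, y⟫_𝕜) atTop (𝓝 ⟪g, y⟫_𝕜)) → g ∈ V

namespace MoscoTendsto

variable {𝕜 W : Type*} [RCLike 𝕜] [NormedAddCommGroup W] [InnerProductSpace 𝕜 W]
  {Vn : ℕ → Submodule 𝕜 W} {V : Submodule 𝕜 W}

theorem comp_strictMono (h : MoscoTendsto Vn V) {φ : ℕ → ℕ} (hφ : StrictMono φ) :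
    MoscoTendsto (Vn ∘ φ) V where
  exists_tendsto η hη :=
    let ⟨ηn, hmem, hlim⟩ := h.exists_tendsto η hη
    ⟨ηn ∘ φ, fun k ↦ hmem (φ k), hlim.comp hφ.tendsto_atTop⟩
  mem_of_tendsto_inner nk hnk := h.mem_of_tendsto_inner (φ ∘ nk) (hφ.comp hnk)

variable {F q : W} {p : ℕ → W}

theorem tendsto_of_tendsto_inner (h : MoscoTendsto Vn V) (hq : q ∈ V) (hFq : F - q ∈ Vᗮ)
    (hp : ∀ n, p n ∈ Vn n) (hFp : ∀ n, F - p n ∈ (Vn n)ᗮ) {g : W}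
    (hg : ∀ y, Tendsto (fun n ↦ ⟪p n, y⟫_𝕜) atTop (𝓝 ⟪g, y⟫_𝕜)) :
    Tendsto p atTop (𝓝 q) := by
  obtain ⟨η, hη, hηq⟩ := h.exists_tendsto q hq
  have hgV : g ∈ V := h.mem_of_tendsto_inner id strictMono_id p hp g hg
  have hbound (n : ℕ) : ‖p n‖ ≤ ‖F‖ := norm_le_of_mem_of_sub_mem_orthogonal (hp n) (hFp n)
  have horth : ⟪q - g, q - F⟫_𝕜 = 0 := by
    rw [← neg_sub F q, inner_neg_right,
      V.inner_right_of_mem_orthogonal (V.sub_mem hq hgV) hFq, neg_zero]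
  have hinner : Tendsto (fun n ↦ ⟪η n - p n, η n - p n⟫_𝕜) atTop (𝓝 0) := by
    simp only [inner_sub_self_eq_of_sub_mem_orthogonal (hη _) (hp _) (hFp _), ← horth,
      inner_sub_left _ _ (_ - F)]
    have hηF : Tendsto (fun n ↦ η n - F) atTop (𝓝 (q - F)) := hηq.sub_const F
    exact (hηq.inner hηF).sub (tendsto_inner_of_tendsto_inner_of_tendsto hbound hg hηF)
  have hsub : Tendsto (fun n ↦ η n - p n) atTop (𝓝 0) := by
    rw [tendsto_zero_iff_norm_tendsto_zero] at hinner ⊢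
    simpa [inner_self_eq_norm_sq_to_K] using hinner.sqrt
  simpa only [sub_sub_cancel, sub_zero] using hηq.sub hsub

theorem tendsto_of_sub_mem_orthogonal [CompleteSpace W] (h : MoscoTendsto Vn V) (hq : q ∈ V)
    (hFq : F - q ∈ Vᗮ) (hp : ∀ n, p n ∈ Vn n) (hFp : ∀ n, F - p n ∈ (Vn n)ᗮ) :
    Tendsto p atTop (𝓝 q) := by
  refine tendsto_of_subseq_tendsto fun ns hns ↦ ?_
  obtain ⟨ψ, -, hψ⟩ := strictMono_subseq_of_tendsto_atTop hns
  obtain ⟨g, φ, hφ, hg⟩ := exists_subseq_tendsto_inner (𝕜 := 𝕜) (x := p ∘ ns ∘ ψ)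
    fun k ↦ norm_le_of_mem_of_sub_mem_orthogonal (hp (ns (ψ k))) (hFp _)
  exact ⟨ψ ∘ φ, (h.comp_strictMono (hψ.comp hφ)).tendsto_of_tendsto_inner hq hFq
    (fun k ↦ hp _) (fun k ↦ hFp _) hg⟩

end MoscoTendsto

theorem stmt_9_general {𝕜 H W : Type*} [RCLike 𝕜]
    [SeminormedAddCommGroup H] [InnerProductSpace 𝕜 H]
    [NormedAddCommGroup W] [InnerProductSpace 𝕜 W] [CompleteSpace W]
    (i : W →L[𝕜] H) {V : Submodule 𝕜 W} {Vn : ℕ → Submodule 𝕜 W} (hV : MoscoTendsto Vn V)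
    (f : H) {u : W} (hu_mem : u ∈ V) (hu : ∀ v ∈ V, ⟪u, v⟫_𝕜 = ⟪f, i v⟫_𝕜)
    {un : ℕ → W} (hun_mem : ∀ n, un n ∈ Vn n)
    (hun : ∀ n, ∀ v ∈ Vn n, ⟪un n, v⟫_𝕜 = ⟪f, i v⟫_𝕜) :
    Tendsto (fun n ↦ ‖u - un n‖) atTop (𝓝 0) ∧
      Tendsto (fun n ↦ ‖i u - i (un n)‖) atTop (𝓝 0) := by
  let F : W := (InnerProductSpace.toDual 𝕜 W).symm (innerSL 𝕜 f ∘L i)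
  have hF (v : W) : ⟪F, v⟫_𝕜 = ⟪f, i v⟫_𝕜 := InnerProductSpace.toDual_symm_apply
  have hlim : Tendsto un atTop (𝓝 u) := hV.tendsto_of_sub_mem_orthogonal (F := F) hu_mem
    (Submodule.sub_mem_orthogonal_of_inner_left fun v ↦ (hF v).trans (hu v v.2).symm) hun_mem
    fun n ↦ Submodule.sub_mem_orthogonal_of_inner_left fun v ↦ (hF v).trans (hun n v v.2).symm
  have hilim : Tendsto (fun n ↦ i (un n)) atTop (𝓝 (i u)) := (i.continuous.tendsto u).comp hlim
  simp only [norm_sub_rev u, norm_sub_rev (i u)]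
  exact ⟨tendsto_iff_norm_sub_tendsto_zero.1 hlim, tendsto_iff_norm_sub_tendsto_zero.1 hilim⟩

/-- Let `H`, `W` be real Hilbert spaces, `i : W → H` continuous linear
with `‖i w‖ ≤ ‖w‖`.  Let `V` be a closed subspace of `W` and `(Vn n)` finite-dimensional
subspaces of `W`.  Assume (a) every `η ∈ V` is approximated by a sequence `η_n ∈ Vn n`
in the `W`-norm, and (b) every weak limit in `W` of a sequence `w_k ∈ Vn (n_k)` (with
`(n_k)` strictly increasing) belongs to `V`.  Then for every `f ∈ H` the Riesz
representatives satisfy `‖u_V(f) − u_{Vn n}(f)‖_W → 0`; in particular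
`‖R_V f − R_{Vn n} f‖_H → 0`, i.e. the `R_{Vn n}` converge pointwise on `H` to `R_V`. -/
theorem stmt_9
    {H W : Type*} [NormedAddCommGroup H] [InnerProductSpace ℝ H] [CompleteSpace H]
    [NormedAddCommGroup W] [InnerProductSpace ℝ W] [CompleteSpace W]
    (i : W →L[ℝ] H) (hi : ∀ w : W, ‖i w‖ ≤ ‖w‖)
    (V : Submodule ℝ W) (hVclosed : IsClosed (V : Set W))
    (Vn : ℕ → Submodule ℝ W) (hVnfin : ∀ n, FiniteDimensional ℝ (Vn n))
    (ha : ∀ η ∈ V, ∃ ηn : ℕ → W, (∀ n, ηn n ∈ Vn n) ∧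
      Tendsto (fun n => ‖η - ηn n‖) atTop (nhds 0))
    (hb : ∀ nk : ℕ → ℕ, StrictMono nk → ∀ w : ℕ → W, (∀ k, w k ∈ Vn (nk k)) →
      ∀ g : W, (∀ y : W, Tendsto (fun k => ⟪w k, y⟫_ℝ) atTop (nhds ⟪g, y⟫_ℝ)) →
      g ∈ V)
    (uV : H → W) (huVmem : ∀ f : H, uV f ∈ V)
    (huV : ∀ f : H, ∀ v ∈ V, ⟪uV f, v⟫_ℝ = ⟪f, i v⟫_ℝ)
    (un : ℕ → H → W) (hunmem : ∀ n (f : H), un n f ∈ Vn n)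
    (hun : ∀ n (f : H), ∀ v ∈ Vn n, ⟪un n f, v⟫_ℝ = ⟪f, i v⟫_ℝ) :
    ∀ f : H,
      Tendsto (fun n => ‖uV f - un n f‖) atTop (nhds 0) ∧
      Tendsto (fun n => ‖i (uV f) - i (un n f)‖) atTop (nhds 0) := by
  have hmosco : MoscoTendsto Vn V := ⟨fun η hη ↦ (ha η hη).imp fun _ ↦ And.imp_right fun hlim ↦
    tendsto_iff_norm_sub_tendsto_zero.2 (by simpa only [norm_sub_rev] using hlim), hb⟩
  exact fun f ↦ stmt_9_general i hmosco f (huVmem f) (huV f) (hunmem · f) (hun · f)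
end

section
/- Let H be a real Hilbert space and let T and T_n (n ∈ ℕ) be compact self-adjoint continuous linear operators on H. Assume the family (T_n) is collectively compact and that T_n f → T f in H for every f ∈ H. Let μ ≠ 0 be an eigenvalue of T, let E := ker(μ·I − T) be its eigenspace, which is finite-dimensional of dimension m, and let φ_1, …, φ_m be an orthonormal basis of E. Then there exist constants C > 0, r > 0 and N ∈ ℕ such that for every n ≥ N and every eigenvalue ν of T_n with |ν − μ| < r, one has |μ − ν| ≤ C ( Σ_{i,j=1}^m |⟨(T − T_n)φ_i, φ_j⟩_H| + ‖(T − T_n) ∘ ι_E‖² ), where ι_E : E → H is the inclusion of the eigenspace and ‖·‖ denotes the operator norm. -/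
open scoped InnerProductSpace
open Filter Topology

/-!
Let `E` be the `μ`-eigenspace of `T`, and split an eigenvector `x` of `Tₙ` for the eigenvalue `ν`
as `x = e + w` with `e ∈ E` and `w ∈ Eᗮ`. Symmetry gives
`(μ - ν) * ‖e‖ ^ 2 = ⟪(T - Tₙ) e, e⟫ + ⟪(T - Tₙ) e, w⟫`, and the cross term is quadratic in the
error as soon as `‖w‖` is bounded by a multiple of `‖(T - Tₙ) e‖`. For this bound let `P` be the
projection onto `Eᗮ`, so that `P (Tₙ w - ν w) = P (T - Tₙ) e`. The operators `P ∘ Tₙ` are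
collectively compact and converge pointwise to `P ∘ T`, and `P ∘ T - μ` is injective because `T`
preserves `Eᗮ`; by compactness, `P ∘ Tₙ - ν` is bounded below uniformly for `n` large and `ν` near
`μ`.
-/

section CollectivelyCompact

variable {𝕜 E F G ι : Type*} [NontriviallyNormedField 𝕜]
  [NormedAddCommGroup E] [NormedSpace 𝕜 E] [NormedAddCommGroup F] [NormedSpace 𝕜 F]
  [NormedAddCommGroup G] [NormedSpace 𝕜 G]

theorem exists_mem_shell_norm_apply_le (A : E →ₗ[𝕜] F) {a : 𝕜} (ha : 1 < ‖a‖) {c : ℝ} {x : E}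
    (hx : ‖A x‖ < c * ‖x‖) : ∃ u, 1 / ‖a‖ ≤ ‖u‖ ∧ ‖u‖ ≤ 1 ∧ ‖A u‖ ≤ c := by
  have hpos : 0 < c * ‖x‖ := (norm_nonneg _).trans_lt hx
  have hc : 0 < c := pos_of_mul_pos_left hpos (norm_nonneg x)
  have hx0 : x ≠ 0 := norm_pos_iff.1 (pos_of_mul_pos_right hpos hc.le)
  obtain ⟨d, -, hd_lt, hd_le, -⟩ := rescale_to_shell ha one_pos hx0
  refine ⟨d • x, hd_le, hd_lt.le, ?_⟩
  calc ‖A (d • x)‖ = ‖d‖ * ‖A x‖ := by rw [map_smul, norm_smul]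
    _ ≤ ‖d‖ * (c * ‖x‖) := by gcongr
    _ = c * ‖d • x‖ := by rw [norm_smul, mul_left_comm]
    _ ≤ c := mul_le_of_le_one_right hc.le hd_lt.le

theorem tendsto_apply_of_opNorm_le {α : Type*} {T : ι → E →L[𝕜] F} {M : ℝ} (hT : ∀ i, ‖T i‖ ≤ M)
    {A : E →L[𝕜] F} {l : Filter ι} (hlim : ∀ x, Tendsto (fun i => T i x) l (𝓝 (A x)))
    {f : Filter α} {i : α → ι} {u : α → E} {w : E} (hi : Tendsto i f l)
    (hu : Tendsto u f (𝓝 w)) : Tendsto (fun a => T (i a) (u a)) f (𝓝 (A w)) := by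
  have hdiff : Tendsto (fun a => T (i a) (u a - w)) f (𝓝 0) := by
    refine squeeze_zero_norm (fun a => (T (i a)).le_of_opNorm_le (hT _) _) ?_
    simpa only [mul_zero] using (tendsto_iff_norm_sub_tendsto_zero.1 hu).const_mul M
  simpa only [map_sub, Function.comp_apply, sub_add_cancel, zero_add] using
    hdiff.add ((hlim w).comp hi)

/-- A family of operators is collectively compact if the union of the images of any bounded set
is relatively compact. -/
def CollectivelyCompact (T : ι → E →L[𝕜] F) : Prop :=
  ∀ B : Set E, Bornology.IsBounded B → IsCompact (closure (⋃ i, T i '' B))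

namespace CollectivelyCompact

theorem clm_comp {T : ι → E →L[𝕜] F} (hT : CollectivelyCompact T) (A : F →L[𝕜] G) :
    CollectivelyCompact fun i => A ∘L T i := by
  intro B hB
  refine ((hT B hB).image A.continuous).closure_of_subset (Set.iUnion_subset fun i => ?_)
  rintro _ ⟨x, hx, rfl⟩
  exact ⟨T i x, subset_closure (Set.mem_iUnion.2 ⟨i, x, hx, rfl⟩), rfl⟩

theorem exists_opNorm_le {T : ι → E →L[𝕜] F} (hT : CollectivelyCompact T) :
    ∃ M, ∀ i, ‖T i‖ ≤ M := by
  obtain ⟨M, hM, hbound⟩ :=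
    ((hT _ Metric.isBounded_closedBall).isBounded.subset subset_closure).exists_pos_norm_le
  obtain ⟨a, ha⟩ := NormedField.exists_one_lt_norm 𝕜
  refine ⟨M * ‖a‖, fun i => (T i).opNorm_le_of_shell one_pos (by positivity) ha fun x hax hx1 => ?_⟩
  have hTx : ‖T i x‖ ≤ M :=
    hbound _ (Set.mem_iUnion.2 ⟨i, x, mem_closedBall_zero_iff.2 hx1.le, rfl⟩)
  have hax' : 1 ≤ ‖a‖ * ‖x‖ := (div_le_iff₀' (by positivity)).1 hax
  calc ‖T i x‖ ≤ M * 1 := by rwa [mul_one]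
    _ ≤ M * (‖a‖ * ‖x‖) := by gcongr
    _ = M * ‖a‖ * ‖x‖ := (mul_assoc _ _ _).symm

theorem exists_tendsto_apply_eq_smul {α : Type*} {T : ι → E →L[𝕜] E} (hT : CollectivelyCompact T)
    {A : E →L[𝕜] E} {l : Filter ι} (hlim : ∀ x, Tendsto (fun i => T i x) l (𝓝 (A x)))
    {μ : 𝕜} (hμ : μ ≠ 0) {f : Ultrafilter α} {i : α → ι} {ν : α → 𝕜} {u : α → E} {R : ℝ}
    (hi : Tendsto i f l) (hν : Tendsto ν f (𝓝 μ)) (hu : ∀ᶠ a in f, ‖u a‖ ≤ R)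
    (hres : Tendsto (fun a => T (i a) (u a) - ν a • u a) f (𝓝 0)) :
    ∃ w, Tendsto u f (𝓝 w) ∧ A w = μ • w := by
  have hmem : ∀ᶠ a in f, T (i a) (u a) ∈ closure (⋃ i, T i '' Metric.closedBall 0 R) := by
    filter_upwards [hu] with a ha
    exact subset_closure (Set.mem_iUnion.2 ⟨i a, u a, mem_closedBall_zero_iff.2 ha, rfl⟩)
  obtain ⟨y, -, hy⟩ :=
    (hT _ Metric.isBounded_closedBall).ultrafilter_le_nhds' (f.map fun a => T (i a) (u a)) hmem
  have hTu : Tendsto (fun a => T (i a) (u a)) f (𝓝 y) := hy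
  have hνu : Tendsto (fun a => ν a • u a) f (𝓝 y) := by
    simpa only [sub_sub_cancel, sub_zero] using hTu.sub hres
  have hu_lim : Tendsto u f (𝓝 (μ⁻¹ • y)) := by
    refine ((hν.inv₀ hμ).smul hνu).congr' ?_
    filter_upwards [hν.eventually_ne hμ] with a ha
    exact inv_smul_smul₀ ha _
  obtain ⟨M, hM⟩ := hT.exists_opNorm_le
  have hAw : A (μ⁻¹ • y) = y :=
    tendsto_nhds_unique (tendsto_apply_of_opNorm_le hM hlim hi hu_lim) hTu
  exact ⟨μ⁻¹ • y, hu_lim, hAw.trans (smul_inv_smul₀ hμ y).symm⟩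

theorem exists_eventually_mul_norm_le_norm_sub_smul {T : ι → E →L[𝕜] E}
    (hT : CollectivelyCompact T) {A : E →L[𝕜] E} {l : Filter ι}
    (hlim : ∀ x, Tendsto (fun i => T i x) l (𝓝 (A x))) {μ : 𝕜} (hμ : μ ≠ 0)
    (hinj : ∀ x, A x = μ • x → x = 0) :
    ∃ c > 0, ∀ᶠ p in l ×ˢ 𝓝 μ, ∀ x, c * ‖x‖ ≤ ‖T p.1 x - p.2 • x‖ := by
  -- With the constant `c` as a further coordinate tending to `0`, a single ultrafilter carries the
  -- whole sequence of approximate eigenvectors that would contradict the bound.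
  suffices ∀ᶠ q in 𝓝[>] (0 : ℝ) ×ˢ (l ×ˢ 𝓝 μ), ∀ x, q.1 * ‖x‖ ≤ ‖T q.2.1 x - q.2.2 • x‖ by
    obtain ⟨c, hbound, hc⟩ := (this.curry.and self_mem_nhdsWithin).exists
    exact ⟨c, hc, hbound⟩
  refine mem_iff_ultrafilter.2 fun f hf => by_contra fun hfail => ?_
  obtain ⟨a, ha⟩ := NormedField.exists_one_lt_norm 𝕜
  have hshell : ∀ᶠ q : ℝ × ι × 𝕜 in f, ∃ u : E, 1 / ‖a‖ ≤ ‖u‖ ∧ ‖u‖ ≤ 1 ∧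
      ‖T q.2.1 u - q.2.2 • u‖ ≤ q.1 := by
    filter_upwards [Ultrafilter.eventually_not.2 hfail] with q hq
    obtain ⟨x, hx⟩ := not_forall.1 hq
    exact exists_mem_shell_norm_apply_le (T q.2.1 - q.2.2 • .id 𝕜 E : E →L[𝕜] E).toLinearMap ha
      (not_le.1 hx)
  obtain ⟨u, hu⟩ := hshell.choice
  obtain ⟨hc, hi, hν⟩ : Tendsto (fun q : ℝ × ι × 𝕜 => q.1) f (𝓝[>] 0) ∧
      Tendsto (fun q : ℝ × ι × 𝕜 => q.2.1) f l ∧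
      Tendsto (fun q : ℝ × ι × 𝕜 => q.2.2) f (𝓝 μ) := by
    have := tendsto_prod_iff'.1 (tendsto_id.mono_left hf)
    exact ⟨this.1, tendsto_prod_iff'.1 this.2⟩
  have hres : Tendsto (fun q : ℝ × ι × 𝕜 => T q.2.1 (u q) - q.2.2 • u q) f (𝓝 0) :=
    squeeze_zero_norm' (hu.mono fun _ hq => hq.2.2) (hc.mono_right nhdsWithin_le_nhds)
  obtain ⟨w, huw, hAw⟩ :=
    hT.exists_tendsto_apply_eq_smul hlim hμ hi hν (hu.mono fun q hq => hq.2.1) hres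
  have hw : 1 / ‖a‖ ≤ ‖w‖ := ge_of_tendsto huw.norm (hu.mono fun q hq => hq.1)
  rw [hinj w hAw, norm_zero] at hw
  exact hw.not_gt (by positivity)

end CollectivelyCompact

end CollectivelyCompact

section InnerProductSpace

open Module.End (eigenspace mem_eigenspace_iff HasEigenvalue hasEigenvalue_of_hasEigenvector)

variable {𝕜 H ι : Type*} [RCLike 𝕜] [NormedAddCommGroup H] [InnerProductSpace 𝕜 H]

theorem norm_inner_apply_le_sum_mul {F κ κ' : Type*} [NormedAddCommGroup F]
    [InnerProductSpace 𝕜 F] [Fintype κ] [Fintype κ'] (A : F →ₗ[𝕜] H) {φ : κ → F} {ψ : κ' → H}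
    (hφ : Orthonormal 𝕜 φ) (hψ : Orthonormal 𝕜 ψ) {x : F} (hx : x ∈ Submodule.span 𝕜 (Set.range φ))
    {y : H} (hy : y ∈ Submodule.span 𝕜 (Set.range ψ)) :
    ‖⟪A x, y⟫_𝕜‖ ≤ (∑ a, ∑ b, ‖⟪A (φ a), ψ b⟫_𝕜‖) * (‖x‖ * ‖y‖) := by
  obtain ⟨c, rfl⟩ := (Submodule.mem_span_range_iff_exists_fun 𝕜).1 hx
  obtain ⟨d, rfl⟩ := (Submodule.mem_span_range_iff_exists_fun 𝕜).1 hy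
  set x := ∑ a, c a • φ a
  set y := ∑ b, d b • ψ b
  have hc (a) : ‖c a‖ ≤ ‖x‖ := by
    simpa only [x, hφ.inner_right_fintype, hφ.1 a, one_mul] using
      norm_inner_le_norm (𝕜 := 𝕜) (φ a) x
  have hd (b) : ‖d b‖ ≤ ‖y‖ := by
    simpa only [y, hψ.inner_right_fintype, hψ.1 b, one_mul] using
      norm_inner_le_norm (𝕜 := 𝕜) (ψ b) y
  calc ‖⟪A x, y⟫_𝕜‖
      = ‖∑ a, ∑ b, ⟪A (c a • φ a), d b • ψ b⟫_𝕜‖ := by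
        rw [map_sum, sum_inner]
        simp only [y, inner_sum]
    _ ≤ ∑ a, ∑ b, ‖⟪A (c a • φ a), d b • ψ b⟫_𝕜‖ :=
        norm_sum_le_of_le _ fun a _ => norm_sum_le _ _
    _ ≤ ∑ a, ∑ b, ‖⟪A (φ a), ψ b⟫_𝕜‖ * (‖x‖ * ‖y‖) := by
        gcongr with a _ b _
        rw [map_smul, inner_smul_left, inner_smul_right, norm_mul, norm_mul, RCLike.norm_conj,
          ← mul_assoc, mul_comm]
        gcongr
        exacts [hc a, hd b]
    _ = (∑ a, ∑ b, ‖⟪A (φ a), ψ b⟫_𝕜‖) * (‖x‖ * ‖y‖) := by simp only [Finset.sum_mul]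

theorem CollectivelyCompact.exists_eventually_mul_norm_le_norm_starProjection
    {T : H →L[𝕜] H} {Tn : ι → H →L[𝕜] H} (hTn : CollectivelyCompact Tn)
    (hT : (T : H →ₗ[𝕜] H).IsSymmetric) {l : Filter ι}
    (hlim : ∀ x, Tendsto (fun i => Tn i x) l (𝓝 (T x))) {μ : 𝕜} (hμ : μ ≠ 0)
    [(eigenspace (T : Module.End 𝕜 H) μ)ᗮ.HasOrthogonalProjection] :
    ∃ c > 0, ∀ᶠ p in l ×ˢ 𝓝 μ, ∀ w ∈ (eigenspace (T : Module.End 𝕜 H) μ)ᗮ,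
      c * ‖w‖ ≤ ‖(eigenspace (T : Module.End 𝕜 H) μ)ᗮ.starProjection (Tn p.1 w - p.2 • w)‖ := by
  set E := eigenspace (T : Module.End 𝕜 H) μ
  have hinj (w) (hw : (Eᗮ.starProjection ∘L T) w = μ • w) : w = 0 := by
    have hw_orth : w ∈ Eᗮ :=
      (Eᗮ.smul_mem_iff hμ).1 (hw ▸ Submodule.starProjection_apply_mem _ _)
    have hTw : T w ∈ Eᗮ := hT.invariant_orthogonalComplement_eigenspace μ w hw_orth
    have hw_mem : w ∈ E := mem_eigenspace_iff.2 <| by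
      rwa [ContinuousLinearMap.comp_apply, Submodule.starProjection_eq_self_iff.2 hTw] at hw
    exact inner_self_eq_zero.1 (hw_orth w hw_mem)
  have hlim_proj (x) :
      Tendsto (fun i => (Eᗮ.starProjection ∘L Tn i) x) l (𝓝 ((Eᗮ.starProjection ∘L T) x)) :=
    (Eᗮ.starProjection.continuous.tendsto _).comp (hlim x)
  obtain ⟨c, hc, hbound⟩ :=
    (hTn.clm_comp _).exists_eventually_mul_norm_le_norm_sub_smul hlim_proj hμ hinj
  refine ⟨c, hc, hbound.mono fun p hp w hw => ?_⟩
  rw [map_sub, map_smul, Submodule.starProjection_eq_self_iff.2 hw]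
  exact hp w

theorem inner_sub_apply_eq_conj_sub_mul_inner {T S : H →L[𝕜] H}
    (hS : (S : H →ₗ[𝕜] H).IsSymmetric) {μ ν : 𝕜} {e x : H} (he : T e = μ • e) (hx : S x = ν • x) :
    ⟪(T - S) e, x⟫_𝕜 = (starRingEnd 𝕜 μ - ν) * ⟪e, x⟫_𝕜 := by
  have hSe : ⟪S e, x⟫_𝕜 = ⟪e, S x⟫_𝕜 := hS e x
  rw [sub_apply, inner_sub_left, hSe, he, hx, inner_smul_left,
    inner_smul_right, sub_mul]

theorem starProjection_orthogonal_sub_smul_eq {E : Submodule 𝕜 H} [Eᗮ.HasOrthogonalProjection]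
    {T S : H →L[𝕜] H} {μ ν : 𝕜} {e w : H} (he : e ∈ E) (hTe : T e = μ • e)
    (hSx : S (e + w) = ν • (e + w)) :
    Eᗮ.starProjection (S w - ν • w) = Eᗮ.starProjection ((T - S) e) := by
  have hsub : S w - ν • w = (T - S) e - (μ - ν) • e := by
    rw [map_add] at hSx
    rw [sub_apply, hTe, eq_sub_of_add_eq' hSx]
    module
  rw [hsub, map_sub, map_smul, Submodule.starProjection_orthogonal_apply_eq_zero he, smul_zero,
    sub_zero]

theorem norm_eigenvalue_sub_le {T S : H →L[𝕜] H} (hT : (T : H →ₗ[𝕜] H).IsSymmetric)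
    (hS : (S : H →ₗ[𝕜] H).IsSymmetric) {μ ν : 𝕜}
    [(eigenspace (T : Module.End 𝕜 H) μ).HasOrthogonalProjection]
    (hν : HasEigenvalue (S : Module.End 𝕜 H) ν) {c s : ℝ} (hc : 0 < c)
    (hbelow : ∀ w ∈ (eigenspace (T : Module.End 𝕜 H) μ)ᗮ, c * ‖w‖ ≤
      ‖(eigenspace (T : Module.End 𝕜 H) μ)ᗮ.starProjection (S w - ν • w)‖)
    (hform : ∀ e ∈ eigenspace (T : Module.End 𝕜 H) μ, ‖⟪(T - S) e, e⟫_𝕜‖ ≤ s * ‖e‖ ^ 2) :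
    ‖μ - ν‖ ≤ s + c⁻¹ * ‖(T - S) ∘L (eigenspace (T : Module.End 𝕜 H) μ).subtypeL‖ ^ 2 := by
  set E := eigenspace (T : Module.End 𝕜 H) μ
  set δ := ‖(T - S) ∘L E.subtypeL‖
  obtain ⟨x, hx, hx0⟩ := hν.exists_hasEigenvector
  obtain ⟨e, he, w, hw, rfl⟩ := E.exists_add_mem_mem_orthogonal x
  have hSx : S (e + w) = ν • (e + w) := mem_eigenspace_iff.1 hx
  have hTe : T e = μ • e := mem_eigenspace_iff.1 he
  have hδ : ‖(T - S) e‖ ≤ δ * ‖e‖ := ((T - S) ∘L E.subtypeL).le_opNorm ⟨e, he⟩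
  have hw_le : ‖w‖ ≤ c⁻¹ * (δ * ‖e‖) := (le_inv_mul_iff₀ hc).2 <| calc
    c * ‖w‖ ≤ ‖Eᗮ.starProjection ((T - S) e)‖ :=
      starProjection_orthogonal_sub_smul_eq he hTe hSx ▸ hbelow w hw
    _ ≤ δ * ‖e‖ := (Submodule.norm_starProjection_apply_le _ _).trans hδ
  have he0 : e ≠ 0 := by
    rintro rfl
    exact hx0 (by simpa using hw_le)
  have hμ : starRingEnd 𝕜 μ = μ :=
    hT.conj_eigenvalue_eq_self (hasEigenvalue_of_hasEigenvector ⟨he, he0⟩)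
  have hkey : (μ - ν) * ‖e‖ ^ 2 = ⟪(T - S) e, e⟫_𝕜 + ⟪(T - S) e, w⟫_𝕜 := by
    rw [← inner_add_right, inner_sub_apply_eq_conj_sub_mul_inner hS hTe hSx, hμ, inner_add_right,
      hw e he, add_zero, inner_self_eq_norm_sq_to_K]
  have hcross : ‖⟪(T - S) e, w⟫_𝕜‖ ≤ c⁻¹ * δ ^ 2 * ‖e‖ ^ 2 := calc
    ‖⟪(T - S) e, w⟫_𝕜‖ ≤ ‖(T - S) e‖ * ‖w‖ := norm_inner_le_norm _ _
    _ ≤ (δ * ‖e‖) * (c⁻¹ * (δ * ‖e‖)) := by gcongr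
    _ = c⁻¹ * δ ^ 2 * ‖e‖ ^ 2 := by ring
  refine le_of_mul_le_mul_right ?_ (by positivity : 0 < ‖e‖ ^ 2)
  calc ‖μ - ν‖ * ‖e‖ ^ 2 = ‖(μ - ν) * ‖e‖ ^ 2‖ := by simp
    _ ≤ s * ‖e‖ ^ 2 + c⁻¹ * δ ^ 2 * ‖e‖ ^ 2 := hkey ▸ norm_add_le_of_le (hform e he) hcross
    _ = (s + c⁻¹ * δ ^ 2) * ‖e‖ ^ 2 := (add_mul _ _ _).symm

theorem ker_smul_id_sub_eq_eigenspace (T : H →L[𝕜] H) (μ : 𝕜) :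
    LinearMap.ker (μ • ContinuousLinearMap.id 𝕜 H - T).toLinearMap =
      eigenspace (T : Module.End 𝕜 H) μ := by
  ext x
  rw [mem_eigenspace_iff, LinearMap.mem_ker]
  exact sub_eq_zero.trans eq_comm

theorem stmt_12_general {κ : Type*} [Fintype κ] {T : H →L[𝕜] H} {Tn : ι → H →L[𝕜] H}
    (hT : (T : H →ₗ[𝕜] H).IsSymmetric) (hTn : ∀ i, (Tn i : H →ₗ[𝕜] H).IsSymmetric)
    (hcc : CollectivelyCompact Tn) {l : Filter ι}
    (hlim : ∀ x, Tendsto (fun i => Tn i x) l (𝓝 (T x))) {μ : 𝕜} (hμ : μ ≠ 0) {φ : κ → H}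
    (hφ : Orthonormal 𝕜 φ)
    (hspan : Submodule.span 𝕜 (Set.range φ) = eigenspace (T : Module.End 𝕜 H) μ) :
    ∃ C > 0, ∀ᶠ p in l ×ˢ 𝓝 μ, HasEigenvalue (Tn p.1 : Module.End 𝕜 H) p.2 →
      ‖μ - p.2‖ ≤ C * ((∑ a, ∑ b, ‖⟪(T - Tn p.1) (φ a), φ b⟫_𝕜‖) +
        ‖(T - Tn p.1) ∘L (eigenspace (T : Module.End 𝕜 H) μ).subtypeL‖ ^ 2) := by
  have : FiniteDimensional 𝕜 (eigenspace (T : Module.End 𝕜 H) μ) :=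
    hspan ▸ FiniteDimensional.span_of_finite 𝕜 (Set.finite_range φ)
  obtain ⟨c, hc, hbelow⟩ := hcc.exists_eventually_mul_norm_le_norm_starProjection hT hlim hμ
  refine ⟨max 1 c⁻¹, by positivity, hbelow.mono fun p hp hν => ?_⟩
  have hform (e) (he : e ∈ eigenspace (T : Module.End 𝕜 H) μ) : ‖⟪(T - Tn p.1) e, e⟫_𝕜‖ ≤
      (∑ a, ∑ b, ‖⟪(T - Tn p.1) (φ a), φ b⟫_𝕜‖) * ‖e‖ ^ 2 := by
    rw [← hspan] at he
    rw [sq]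
    exact norm_inner_apply_le_sum_mul (T - Tn p.1).toLinearMap hφ hφ he he
  refine (norm_eigenvalue_sub_le hT (hTn p.1) hν hc hp hform).trans ?_
  rw [mul_add]
  gcongr
  · exact le_mul_of_one_le_left (by positivity) (le_max_left _ _)
  · exact le_max_right _ _

end InnerProductSpace

/-- Let `H` be a real Hilbert space and `T`, `Tn n` (`n ∈ ℕ`) compact
self-adjoint continuous linear operators on `H`.  Assume the family `(Tn)` is
collectively compact and `Tn n f → T f` for every `f ∈ H`.  Let `μ ≠ 0` be an eigenvalue
of `T`, `E := ker(μ·I − T)` its eigenspace, finite-dimensional of dimension `m`, and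
`φ_1, …, φ_m` an orthonormal basis of `E`.  Then there exist `C > 0`, `r > 0` and `N`
such that for every `n ≥ N` and every eigenvalue `ν` of `Tn n` with `|ν − μ| < r`,
`|μ − ν| ≤ C (Σ_{i,j} |⟪(T − Tn n) φ_i, φ_j⟫| + ‖(T − Tn n) ∘ ι_E‖²)`. -/
theorem stmt_12
    {H : Type*} [NormedAddCommGroup H] [InnerProductSpace ℝ H] [CompleteSpace H]
    (T : H →L[ℝ] H) (Tn : ℕ → H →L[ℝ] H)
    (hTcompact : IsCompactOperator (⇑T))
    (hTncompact : ∀ n, IsCompactOperator (⇑(Tn n)))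
    (hTsa : ∀ x y : H, ⟪T x, y⟫_ℝ = ⟪x, T y⟫_ℝ)
    (hTnsa : ∀ n, ∀ x y : H, ⟪Tn n x, y⟫_ℝ = ⟪x, Tn n y⟫_ℝ)
    (hcc : ∀ B : Set H, Bornology.IsBounded B →
      IsCompact (closure (⋃ n : ℕ, (Tn n) '' B)))
    (hpc : ∀ f : H, Tendsto (fun n => Tn n f) atTop (nhds (T f)))
    (μ : ℝ) (hμ : μ ≠ 0) (hμeig : ∃ x : H, x ≠ 0 ∧ T x = μ • x)
    (E : Submodule ℝ H)
    (hE : E = LinearMap.ker (μ • ContinuousLinearMap.id ℝ H - T).toLinearMap)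
    (m : ℕ) (hm : Module.finrank ℝ E = m)
    (φ : Fin m → H) (hφE : ∀ j, φ j ∈ E) (hφon : Orthonormal ℝ φ)
    (hφspan : Submodule.span ℝ (Set.range φ) = E) :
    ∃ C > (0 : ℝ), ∃ r > (0 : ℝ), ∃ N : ℕ, ∀ n ≥ N, ∀ ν : ℝ,
      (∃ x : H, x ≠ 0 ∧ Tn n x = ν • x) → |ν - μ| < r →
      |μ - ν| ≤ C * ((∑ a : Fin m, ∑ b : Fin m, |⟪(T - Tn n) (φ a), φ b⟫_ℝ|) +
        ‖(T - Tn n).comp E.subtypeL‖ ^ 2) := by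
  obtain rfl := hE.trans (ker_smul_id_sub_eq_eigenspace T μ)
  obtain ⟨C, hC, hbound⟩ := stmt_12_general hTsa hTnsa hcc hpc hμ hφon hφspan
  obtain ⟨⟨N, r⟩, ⟨-, hr⟩, h⟩ := (atTop_basis.prod Metric.nhds_basis_ball).eventually_iff.1 hbound
  exact ⟨C, hC, r, hr, N, fun n hn ν ⟨x, hx0, hx⟩ hν => h (x := (n, ν)) ⟨hn, hν⟩
    (Module.End.hasEigenvalue_of_hasEigenvector ⟨Module.End.mem_eigenspace_iff.2 hx, hx0⟩)⟩
end
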